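/- arXiv:1010.3978 — 6 statements merged into one kernel-verified Lean document; each statement's English description precedes it below -/
import Mathlib

section
/- Let H be a complex Hilbert space, D ⊆ H a dense subspace, and T : D → H a symmetric linear operator. If D contains a set of analytic vectors for T that is dense in H, then T is essentially self-adjoint. -/
open scoped InnerProductSpace

/-- A densely defined symmetric operator is *essentially self-adjoint* iff the ranges of
`T + iI` and `T - iI` are both dense in `H`. -/
def EssSelfAdjoint {H : Type*} [NormedAddCommGroup H] [InnerProductSpace ℂ H]
    (D : Submodule ℂ H) (T : D →ₗ[ℂ] H) : Prop :=
  Dense (Set.range fun x : D => T x + Complex.I • (x : H)) ∧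
    Dense (Set.range fun x : D => T x - Complex.I • (x : H))

/-- `v ∈ D` is an analytic vector for `T : D → H` if all iterates `T^n v` are defined and lie
in `D`, and `‖T^n v‖ ≤ c^(n+1) n!` for some `c > 0`.  The sequence `u` records the iterates,
`u n = T^n v`. -/
def IsAnalyticVector {H : Type*} [NormedAddCommGroup H] [InnerProductSpace ℂ H]
    {D : Submodule ℂ H} (T : D →ₗ[ℂ] H) (v : D) : Prop :=
  ∃ u : ℕ → D, u 0 = v ∧ (∀ n : ℕ, ((u (n + 1) : H)) = T (u n)) ∧
    ∃ c : ℝ, 0 < c ∧ ∀ n : ℕ, ‖(u n : H)‖ ≤ c ^ (n + 1) * (Nat.factorial n : ℝ)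

/-!
Suppose a bounded functional `f` kills the range of `T - z`, with `z` non-real, so that
`f (T x) = z * f x` on `D`, and let `K` be the span of the orbit of an analytic vector `v`. For
small imaginary `a` the operator `a T` is skew-symmetric on `K` and its exponential series converges
absolutely at every vector of `K`. The norms of the partial sums `s_N(a T) x` then tend to `‖x‖`, as
for a unitary, while `f (s_N(a T) x)` tends to `exp (a z) * f x`. The partial sums never leave `K`,
so the norm `M` of `f` restricted to `K` satisfies `|exp (a z)| * M ≤ M`. Choosing the sign of `a`
so that `|exp (a z)| > 1` forces `M = 0`; hence `f v = 0`, and `f = 0` once the analytic vectors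
are total.
-/

open Filter Finset Topology
open scoped Nat

theorem hasSum_sum_antidiagonal {ι M : Type*} [AddMonoid ι] [HasAntidiagonal ι]
    [AddCommMonoid M] [TopologicalSpace M] [ContinuousAdd M] [RegularSpace M] {f : ι × ι → M}
    {a : M} (hf : HasSum f a) : HasSum (fun n => ∑ p ∈ antidiagonal n, f p) a := by
  refine (HasAntidiagonal.sigmaAntidiagonalEquivProd.hasSum_iff.mpr hf).sigma fun n => ?_
  rw [← sum_finset_coe]
  exact hasSum_fintype _

theorem summable_inner_of_summable_norm {ι κ 𝕜 E : Type*} [RCLike 𝕜] [SeminormedAddCommGroup E]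
    [InnerProductSpace 𝕜 E] {f : ι → E} {g : κ → E} (hf : Summable fun i => ‖f i‖)
    (hg : Summable fun k => ‖g k‖) : Summable fun p : ι × κ => ⟪f p.1, g p.2⟫_𝕜 :=
  .of_norm_bounded (hf.mul_of_nonneg hg (fun _ => norm_nonneg _) fun _ => norm_nonneg _)
    fun _ => norm_inner_le_norm _ _

theorem dense_of_forall_dual_eq_zero {𝕜 E : Type*} [RCLike 𝕜] [NormedAddCommGroup E]
    [NormedSpace 𝕜 E] {p : Submodule 𝕜 E}
    (h : ∀ f : StrongDual 𝕜 E, (∀ x ∈ p, f x = 0) → f = 0) : Dense (p : Set E) := by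
  have : IsClosed (p.topologicalClosure : Set E) := p.isClosed_topologicalClosure
  intro x
  by_contra hx
  have hmk : p.topologicalClosure.mkQL x ≠ 0 := by
    simpa [← SetLike.mem_coe] using hx
  obtain ⟨g, hg⟩ := SeparatingDual.exists_ne_zero (R := 𝕜) hmk
  refine hg (DFunLike.congr_fun (h (g ∘L p.topologicalClosure.mkQL) fun y hy => ?_) x)
  have hmk_eq_zero : p.topologicalClosure.mkQL y = 0 := by
    simpa using p.le_topologicalClosure hy
  rw [ContinuousLinearMap.comp_apply, hmk_eq_zero, map_zero]

theorem apply_mem_span_orbit {R M : Type*} [Semiring R] [AddCommMonoid M] [Module R M]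
    {D : Submodule R M} {T : D →ₗ[R] M} {u : ℕ → D} (hu : ∀ n, (u (n + 1) : M) = T (u n)) {x : D}
    (hx : (x : M) ∈ Submodule.span R (Set.range fun n => (u n : M))) :
    T x ∈ Submodule.span R (Set.range fun n => (u n : M)) := by
  set K := Submodule.span R (Set.range fun n => (u n : M))
  have hK : K ≤ (K.comap T).map D.subtype := by
    refine Submodule.span_le.mpr (Set.range_subset_iff.mpr fun n => ⟨u n, ?_, rfl⟩)
    exact Submodule.subset_span ⟨n + 1, hu n⟩
  obtain ⟨y, hy, hyx⟩ := hK hx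
  rwa [← Subtype.ext hyx]

section PartialSum

variable {𝕜 E : Type*} [RCLike 𝕜] [AddCommGroup E] [Module 𝕜 E]

/-- The partial sum `∑ k < N, B ^ k / k!` of the exponential series of an endomorphism `B`.
No topology is put on `Module.End 𝕜 E`: convergence is only ever considered at a given vector. -/
def expPartialSum (B : Module.End 𝕜 E) (N : ℕ) : Module.End 𝕜 E :=
  ∑ k ∈ range N, (k ! : 𝕜)⁻¹ • B ^ k

theorem expPartialSum_apply (B : Module.End 𝕜 E) (N : ℕ) (x : E) :
    expPartialSum B N x = ∑ k ∈ range N, (k ! : 𝕜)⁻¹ • (B ^ k) x := by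
  simp [expPartialSum]

theorem tendsto_apply_expPartialSum {B : Module.End 𝕜 E} {f : E →ₗ[𝕜] 𝕜} {ζ : 𝕜}
    (hf : ∀ x, f (B x) = ζ * f x) (x : E) :
    Tendsto (fun N => f (expPartialSum B N x)) atTop (𝓝 (NormedSpace.exp ζ * f x)) := by
  have hpow (k : ℕ) : f ((B ^ k) x) = ζ ^ k * f x := by
    induction k with
    | zero => simp
    | succ k ih => rw [pow_succ', Module.End.mul_apply, hf, ih, pow_succ', mul_assoc]
  refine ((NormedSpace.expSeries_div_hasSum_exp ζ).mul_right (f x)).tendsto_sum_nat.congr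
    fun N => ?_
  rw [expPartialSum_apply, map_sum]
  exact sum_congr rfl fun k _ => by rw [map_smul, hpow, smul_eq_mul]; ring

end PartialSum

section ExpDomain

variable {𝕜 E : Type*} [RCLike 𝕜] [NormedAddCommGroup E] [NormedSpace 𝕜 E]

/-- The subspace of those vectors at which the exponential series of the endomorphism `B` converges
absolutely. Since `E` need not be complete, the series need not have a sum in `E`. -/
def expDomain (B : Module.End 𝕜 E) : Submodule 𝕜 E where
  carrier := {x | Summable fun k : ℕ => ‖(k ! : 𝕜)⁻¹ • (B ^ k) x‖}
  zero_mem' := by simp [summable_zero]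
  add_mem' {x y} hx hy := by
    refine .of_nonneg_of_le (fun _ => norm_nonneg _) (fun k => ?_) (hx.add hy)
    rw [map_add, smul_add]
    exact norm_add_le _ _
  smul_mem' a x hx := by
    refine (hx.mul_left ‖a‖).congr fun k => ?_
    rw [map_smul, smul_comm, norm_smul a]

theorem mem_expDomain {B : Module.End 𝕜 E} {x : E} :
    x ∈ expDomain B ↔ Summable fun k : ℕ => ‖(k ! : 𝕜)⁻¹ • (B ^ k) x‖ :=
  Iff.rfl

variable {A : Module.End 𝕜 E} {x : E} {c : ℝ}

theorem pow_apply_mem_expDomain_smul (hx : ∀ n, ‖(A ^ n) x‖ ≤ c ^ (n + 1) * n !) {a : 𝕜}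
    (ha : ‖a‖ * c < 1) (n : ℕ) : (A ^ n) x ∈ expDomain (a • A) := by
  have hc : 0 ≤ c := by simpa using (norm_nonneg _).trans (hx 0)
  have hgeom := (summable_choose_mul_geometric_of_norm_lt_one n (r := ‖a‖ * c)
    (by rwa [Real.norm_of_nonneg (by positivity)])).mul_left (c ^ (n + 1) * (n ! : ℝ))
  refine mem_expDomain.mpr (.of_nonneg_of_le (fun _ => norm_nonneg _) (fun k => ?_) hgeom)
  have hchoose : ((k + n)! : ℝ) = (k + n).choose n * k ! * n ! := by
    exact_mod_cast (Nat.add_choose_mul_factorial_mul_factorial k n).symm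
  calc ‖(k ! : 𝕜)⁻¹ • ((a • A) ^ k) ((A ^ n) x)‖
      = (k ! : ℝ)⁻¹ * (‖a‖ ^ k * ‖(A ^ (k + n)) x‖) := by
        rw [smul_pow, LinearMap.smul_apply, ← Module.End.mul_apply, ← pow_add, norm_smul,
          norm_smul, norm_inv, norm_pow, RCLike.norm_natCast]
    _ ≤ (k ! : ℝ)⁻¹ * (‖a‖ ^ k * (c ^ (k + n + 1) * (k + n)!)) := by
        gcongr
        exact hx _
    _ = c ^ (n + 1) * (n ! : ℝ) * (((k + n).choose n : ℝ) * (‖a‖ * c) ^ k) := by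
        rw [hchoose]
        field_simp
        ring

theorem eventually_expDomain_smul_eq_top
    (hspan : Submodule.span 𝕜 (Set.range fun n => (A ^ n) x) = ⊤)
    (hx : ∀ n, ‖(A ^ n) x‖ ≤ c ^ (n + 1) * n !) :
    ∀ᶠ a : 𝕜 in 𝓝 0, expDomain (a • A) = ⊤ := by
  have hsmall : ∀ᶠ a : 𝕜 in 𝓝 0, ‖a‖ * c < 1 :=
    (Continuous.tendsto (by fun_prop) 0).eventually_lt_const (by simp)
  filter_upwards [hsmall] with a ha
  rw [eq_top_iff, ← hspan, Submodule.span_le, Set.range_subset_iff]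
  exact pow_apply_mem_expDomain_smul hx ha

end ExpDomain

section SkewSymmetric

variable {𝕜 E : Type*} [RCLike 𝕜] [NormedAddCommGroup E] [InnerProductSpace 𝕜 E]

/-- An endomorphism of an inner product space is skew-symmetric if `⟪B x, y⟫ = -⟪x, B y⟫`; these
are the infinitesimal generators of isometries. -/
def IsSkewSymmetric (B : Module.End 𝕜 E) : Prop :=
  ∀ x y, ⟪B x, y⟫_𝕜 = -⟪x, B y⟫_𝕜

namespace IsSkewSymmetric

variable {B : Module.End 𝕜 E}

theorem inner_pow_apply_left (hB : IsSkewSymmetric B) (k : ℕ) (x y : E) :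
    ⟪(B ^ k) x, y⟫_𝕜 = (-1) ^ k * ⟪x, (B ^ k) y⟫_𝕜 := by
  induction k generalizing y with
  | zero => simp
  | succ k ih =>
    calc ⟪(B ^ (k + 1)) x, y⟫_𝕜 = -⟪(B ^ k) x, B y⟫_𝕜 := by
          rw [pow_succ', Module.End.mul_apply, hB]
      _ = (-1) ^ (k + 1) * ⟪x, (B ^ (k + 1)) y⟫_𝕜 := by
          rw [ih, ← Module.End.mul_apply, ← pow_succ]
          ring

theorem inner_expTerm_expTerm (hB : IsSkewSymmetric B) (x y : E) (j k : ℕ) :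
    ⟪(j ! : 𝕜)⁻¹ • (B ^ j) x, (k ! : 𝕜)⁻¹ • (B ^ k) y⟫_𝕜 =
      ((-1) ^ j * (j + k).choose j : ℤ) * (((j + k)! : 𝕜)⁻¹ * ⟪x, (B ^ (j + k)) y⟫_𝕜) := by
  have hchoose : ((j + k)! : 𝕜) = (j + k).choose j * j ! * k ! := by
    rw [Nat.choose_symm_add]
    exact_mod_cast (Nat.add_choose_mul_factorial_mul_factorial j k).symm
  have hne : ((j + k).choose j : 𝕜) ≠ 0 := by
    exact_mod_cast (Nat.choose_pos (Nat.le_add_right j k)).ne'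
  rw [inner_smul_left, inner_smul_right, hB.inner_pow_apply_left, ← Module.End.mul_apply,
    ← pow_add, hchoose, map_inv₀, map_natCast]
  push_cast
  field_simp

theorem sum_antidiagonal_inner (hB : IsSkewSymmetric B) (x y : E) (n : ℕ) :
    ∑ p ∈ antidiagonal n, ⟪(p.1 ! : 𝕜)⁻¹ • (B ^ p.1) x, (p.2 ! : 𝕜)⁻¹ • (B ^ p.2) y⟫_𝕜 =
      if n = 0 then ⟪x, y⟫_𝕜 else 0 := by
  calc ∑ p ∈ antidiagonal n, ⟪(p.1 ! : 𝕜)⁻¹ • (B ^ p.1) x, (p.2 ! : 𝕜)⁻¹ • (B ^ p.2) y⟫_𝕜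
      = ∑ p ∈ antidiagonal n,
          ((-1) ^ p.1 * n.choose p.1 : ℤ) * ((n ! : 𝕜)⁻¹ * ⟪x, (B ^ n) y⟫_𝕜) :=
        sum_congr rfl fun p hp => by
          rw [hB.inner_expTerm_expTerm, HasAntidiagonal.mem_antidiagonal.mp hp]
    _ = (if n = 0 then 1 else 0 : ℤ) * ((n ! : 𝕜)⁻¹ * ⟪x, (B ^ n) y⟫_𝕜) := by
        rw [← sum_mul, ← Int.cast_sum, Nat.sum_antidiagonal_eq_sum_range_succ_mk,
          Int.alternating_sum_range_choose]
    _ = if n = 0 then ⟪x, y⟫_𝕜 else 0 := by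
        split_ifs with hn <;> simp [hn]

theorem hasSum_inner (hB : IsSkewSymmetric B) {x y : E} (hx : x ∈ expDomain B)
    (hy : y ∈ expDomain B) :
    HasSum (fun p : ℕ × ℕ => ⟪(p.1 ! : 𝕜)⁻¹ • (B ^ p.1) x, (p.2 ! : 𝕜)⁻¹ • (B ^ p.2) y⟫_𝕜)
      ⟪x, y⟫_𝕜 := by
  rw [mem_expDomain] at hx hy
  have hsum := (summable_inner_of_summable_norm (𝕜 := 𝕜) hx hy).hasSum
  have hdiag := hasSum_sum_antidiagonal hsum
  simp only [hB.sum_antidiagonal_inner] at hdiag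
  rwa [hdiag.unique (hasSum_ite_eq 0 ⟪x, y⟫_𝕜)] at hsum

theorem tendsto_inner_expPartialSum (hB : IsSkewSymmetric B) {x y : E} (hx : x ∈ expDomain B)
    (hy : y ∈ expDomain B) :
    Tendsto (fun N => ⟪expPartialSum B N x, expPartialSum B N y⟫_𝕜) atTop (𝓝 ⟪x, y⟫_𝕜) := by
  have hsquares : Tendsto (fun N => range N ×ˢ range N) atTop atTop :=
    tendsto_finsetProd_atTop.comp <|
      (tendsto_finset_range.prod_atTop tendsto_finset_range).comp tendsto_atTop_diagonal
  refine ((hB.hasSum_inner hx hy).comp hsquares).congr fun N => ?_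
  simp only [Function.comp_apply, sum_product_right, expPartialSum_apply, inner_sum, sum_inner]

theorem tendsto_norm_expPartialSum (hB : IsSkewSymmetric B) {x : E} (hx : x ∈ expDomain B) :
    Tendsto (fun N => ‖expPartialSum B N x‖) atTop (𝓝 ‖x‖) := by
  simp only [@norm_eq_sqrt_re_inner 𝕜]
  exact ((RCLike.continuous_re.tendsto _).comp (hB.tendsto_inner_expPartialSum hx hx)).sqrt

variable {f : StrongDual 𝕜 E} {ζ : 𝕜}

theorem norm_exp_mul_norm_dual_apply_le (hB : IsSkewSymmetric B) (hf : ∀ x, f (B x) = ζ * f x)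
    {x : E} (hx : x ∈ expDomain B) : ‖NormedSpace.exp ζ‖ * ‖f x‖ ≤ ‖f‖ * ‖x‖ := by
  rw [← norm_mul]
  exact le_of_tendsto_of_tendsto' (tendsto_apply_expPartialSum (f := (f : E →ₗ[𝕜] 𝕜)) hf x).norm
    ((hB.tendsto_norm_expPartialSum hx).const_mul ‖f‖) fun N => f.le_opNorm _

theorem dual_eq_zero (hB : IsSkewSymmetric B) (hdom : expDomain B = ⊤)
    (hf : ∀ x, f (B x) = ζ * f x) (hζ : 1 < ‖NormedSpace.exp ζ‖) : f = 0 := by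
  have hpos : 0 < ‖NormedSpace.exp ζ‖ := one_pos.trans hζ
  have hle : ‖f‖ ≤ ‖f‖ / ‖NormedSpace.exp ζ‖ := by
    refine f.opNorm_le_bound (by positivity) fun x => ?_
    rw [div_mul_eq_mul_div, le_div_iff₀' hpos]
    exact hB.norm_exp_mul_norm_dual_apply_le hf (hdom ▸ Submodule.mem_top)
  by_contra hne
  exact (div_lt_self (norm_pos_iff.mpr hne) hζ).not_ge hle

end IsSkewSymmetric

end SkewSymmetric

theorem dual_eq_zero_of_isSymmetric {E : Type*} [NormedAddCommGroup E] [InnerProductSpace ℂ E]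
    {A : Module.End ℂ E} (hA : A.IsSymmetric) (hdom : ∀ᶠ a : ℂ in 𝓝 0, expDomain (a • A) = ⊤)
    {f : StrongDual ℂ E} {z : ℂ} (hz : z.im ≠ 0) (hf : ∀ x, f (A x) = z * f x) : f = 0 := by
  let a (t : ℝ) : ℂ := -(t * z.im) * Complex.I
  have ha : Tendsto a (𝓝[>] 0) (𝓝 0) :=
    (Continuous.tendsto' (by fun_prop) _ _ (by simp [a])).mono_left nhdsWithin_le_nhds
  obtain ⟨t, htdom, ht⟩ : ∃ t, expDomain (a t • A) = ⊤ ∧ 0 < t :=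
    ((ha.eventually hdom).and self_mem_nhdsWithin).exists
  have hskew : IsSkewSymmetric (a t • A) := fun x y => by
    simp [a, inner_smul_left, inner_smul_right, hA x y]
  have hre : (a t * z).re = t * z.im ^ 2 := by
    simp only [a, Complex.mul_re, Complex.mul_im, Complex.neg_re, Complex.neg_im, Complex.ofReal_re,
      Complex.ofReal_im, Complex.I_re, Complex.I_im]
    ring
  refine hskew.dual_eq_zero htdom (ζ := a t * z) (fun x => by simp [hf, mul_assoc]) ?_
  rw [← Complex.exp_eq_exp_ℂ, Complex.norm_exp, Real.one_lt_exp_iff, hre]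
  positivity

section Nelson

variable {H : Type*} [NormedAddCommGroup H] [InnerProductSpace ℂ H] {D : Submodule ℂ H}
  {T : D →ₗ[ℂ] H}

theorem IsAnalyticVector.dual_apply_eq_zero {v : D} (hv : IsAnalyticVector T v)
    (hsym : ∀ x y : D, ⟪T x, (y : H)⟫_ℂ = ⟪(x : H), T y⟫_ℂ) {f : StrongDual ℂ H} {z : ℂ}
    (hz : z.im ≠ 0) (hf : ∀ x : D, f (T x) = z * f x) : f v = 0 := by
  obtain ⟨u, rfl, hu, c, -, hbound⟩ := hv
  let K : Submodule ℂ H := Submodule.span ℂ (Set.range fun n => (u n : H))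
  have hmem (n : ℕ) : (u n : H) ∈ K := Submodule.subset_span ⟨n, rfl⟩
  have hKD : K ≤ D := Submodule.span_le.mpr (Set.range_subset_iff.mpr fun n => (u n).2)
  let ι : K →ₗ[ℂ] D := Submodule.inclusion hKD
  let A : Module.End ℂ K := (T ∘ₗ ι).codRestrict K fun x => apply_mem_span_orbit hu x.2
  have hA : A.IsSymmetric := fun x y => hsym (ι x) (ι y)
  have hpow (n : ℕ) : (A ^ n) ⟨u 0, hmem 0⟩ = ⟨u n, hmem n⟩ := by
    induction n with
    | zero => rfl
    | succ n ih =>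
      rw [pow_succ', Module.End.mul_apply, ih]
      exact Subtype.ext (hu n).symm
  have hspan : Submodule.span ℂ (Set.range fun n => (A ^ n) ⟨u 0, hmem 0⟩) = ⊤ := by
    rw [← Submodule.span_span_coe_preimage (s := Set.range fun n => (u n : H))]
    congr 1
    ext x
    simp [hpow, Subtype.ext_iff]
  have hdom : ∀ᶠ a : ℂ in 𝓝 0, expDomain (a • A) = ⊤ :=
    eventually_expDomain_smul_eq_top hspan fun n => by simpa [hpow] using hbound n
  have hzero : f ∘L K.subtypeL = 0 :=
    dual_eq_zero_of_isSymmetric hA hdom hz fun x => hf (ι x)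
  exact DFunLike.congr_fun hzero ⟨u 0, hmem 0⟩

theorem dense_range_sub_smul_of_total_analytic
    (hsym : ∀ x y : D, ⟪T x, (y : H)⟫_ℂ = ⟪(x : H), T y⟫_ℂ)
    {S : Set D} (hS : ∀ v ∈ S, IsAnalyticVector T v)
    (htotal : Dense (Submodule.span ℂ (Subtype.val '' S) : Set H)) {z : ℂ} (hz : z.im ≠ 0) :
    Dense (Set.range fun x : D => T x - z • (x : H)) := by
  refine dense_of_forall_dual_eq_zero (p := LinearMap.range (T - z • D.subtype)) fun f hf => ?_
  have heigen (x : D) : f (T x) = z * f x := by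
    simpa [sub_eq_zero] using hf _ (LinearMap.mem_range_self _ x)
  refine ContinuousLinearMap.ext_on htotal ?_
  rintro _ ⟨v, hv, rfl⟩
  exact (hS v hv).dual_apply_eq_zero hsym hz heigen

theorem nelson_theorem_general (hsym : ∀ x y : D, ⟪T x, (y : H)⟫_ℂ = ⟪(x : H), T y⟫_ℂ)
    {S : Set D} (hS : ∀ v ∈ S, IsAnalyticVector T v)
    (htotal : Dense (Submodule.span ℂ (Subtype.val '' S) : Set H)) :
    EssSelfAdjoint D T := by
  refine ⟨?_, dense_range_sub_smul_of_total_analytic hsym hS htotal (by simp)⟩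
  simpa using dense_range_sub_smul_of_total_analytic hsym hS htotal (z := -Complex.I) (by simp)

end Nelson

/-- **Nelson's Theorem.** A symmetric, densely defined operator whose domain contains a set of
analytic vectors which is dense in `H` is essentially self-adjoint. -/
theorem nelson_theorem {H : Type*} [NormedAddCommGroup H] [InnerProductSpace ℂ H]
    [CompleteSpace H] {D : Submodule ℂ H} (hD : Dense (D : Set H)) (T : D →ₗ[ℂ] H)
    (hsym : ∀ x y : D, ⟪T x, (y : H)⟫_ℂ = ⟪(x : H), T y⟫_ℂ)
    (S : Set D) (hS : ∀ v ∈ S, IsAnalyticVector T v)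
    (hdense : Dense (Subtype.val '' S : Set H)) :
    EssSelfAdjoint D T :=
  nelson_theorem_general hsym hS (hdense.mono Submodule.subset_span)
end

section
/- Let A be an essentially self-adjoint operator on a complex Hilbert space H with dense domain D, and let B be a symmetric operator with the same domain D such that ‖Bφ‖ ≤ ‖Aφ‖ + b‖φ‖ for some constant b ≥ 0 and all φ ∈ D. Then the operator A + B with domain D is essentially self-adjoint. -/
open scoped InnerProductSpace

/-!
Let `z` be nonreal. Symmetry of `A` and `B` bounds `‖x‖` and `(1 - t) ‖B x‖` by a constant times
`‖(A + t B + z) x‖`, uniformly in `t ∈ [0, 1)`. Replacing `t` by `t + δ` is therefore a perturbation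
of `A + t B + z` of relative bound `O(δ / (1 - t))`, so density of the range propagates from `t = 0`
to every `t < 1`.

The relative bound degenerates at `t = 1`. There, a functional `f` that vanishes on the range of
`A + B + z` satisfies `f ((A + t B + z) x) = -(1 - t) f (B x)`. The factor `1 - t` makes the right
side `O(1 - t) ‖(A + t B + z) x‖` for `f = ⟪y, ·⟫` with `y` in the domain, since then
`f (B x) = ⟪B y, x⟫`. Such functionals are dense in the dual and `(1 - t) ‖B x‖` is uniformly
controlled, so letting `t → 1` gives `f = 0`.
-/

section NormedSpace

variable {𝕜 E F : Type*} [RCLike 𝕜] [AddCommGroup E] [Module 𝕜 E]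
  [NormedAddCommGroup F] [NormedSpace 𝕜 F] {S T : E →ₗ[𝕜] F} {C : ℝ}

theorem denseRange_of_forall_dual_eq_zero
    (h : ∀ f : StrongDual 𝕜 F, (∀ x, f (S x) = 0) → f = 0) : DenseRange S := by
  set M := S.range.topologicalClosure with hM
  have : IsClosed (M : Set F) := S.range.isClosed_topologicalClosure
  suffices hM_top : M = ⊤ by
    rwa [hM, ← Submodule.dense_iff_topologicalClosure_eq_top, LinearMap.coe_range] at hM_top
  refine Submodule.eq_top_iff'.2 fun y => (Submodule.Quotient.mk_eq_zero M).1 ?_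
  refine SeparatingDual.eq_zero_of_forall_dual_eq_zero (R := 𝕜) fun g => ?_
  have hg : g ∘L M.mkQL = 0 := h _ fun x => by
    have hx : S x ∈ M := S.range.le_topologicalClosure (LinearMap.mem_range_self S x)
    simp [(Submodule.Quotient.mk_eq_zero M).2 hx]
  exact DFunLike.congr_fun hg y

theorem norm_apply_le_of_denseRange {X Y Z : Type*} [SeminormedAddCommGroup Y]
    [SeminormedAddCommGroup Z] {u : X → Y} (hu : DenseRange u) {f : Y → Z} (hf : Continuous f)
    {c : ℝ} (h : ∀ x, ‖f (u x)‖ ≤ c * ‖u x‖) (y : Y) : ‖f y‖ ≤ c * ‖y‖ :=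
  isClosed_property hu (isClosed_le hf.norm (continuous_const.mul continuous_norm)) h y

theorem denseRange_add_of_norm_le (hS : DenseRange S) (hC₀ : 0 ≤ C) (hC : C < 1)
    (hT : ∀ x, ‖T x‖ ≤ C * ‖S x‖) : DenseRange (S + T) := by
  refine denseRange_of_forall_dual_eq_zero fun f hf => ?_
  have hfS (x : E) : ‖f (S x)‖ ≤ C * ‖f‖ * ‖S x‖ := by
    have hfx : f (S x) = -f (T x) := eq_neg_of_add_eq_zero_left (by simpa using hf x)
    calc ‖f (S x)‖ = ‖f (T x)‖ := by rw [hfx, norm_neg]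
      _ ≤ ‖f‖ * (C * ‖S x‖) := f.le_opNorm_of_le (hT x)
      _ = C * ‖f‖ * ‖S x‖ := by ring
  have hf_le : ‖f‖ ≤ C * ‖f‖ :=
    f.opNorm_le_bound (by positivity) (norm_apply_le_of_denseRange hS f.continuous hfS)
  exact norm_le_zero_iff.1 (by nlinarith)

theorem denseRange_add_smul_of_sub_mul_lt {t u : ℝ} (hC : 0 ≤ C) (htu : t ≤ u) (ht : t < 1)
    (hCtu : (u - t) * C < 1 - t)
    (hT : ∀ x, (1 - t) * ‖T x‖ ≤ C * ‖S x + (t : 𝕜) • T x‖)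
    (hd : DenseRange (S + (t : 𝕜) • T)) : DenseRange (S + (u : 𝕜) • T) := by
  have ht' : 0 < 1 - t := sub_pos.2 ht
  have hut : 0 ≤ u - t := sub_nonneg.2 htu
  have hsplit : S + (u : 𝕜) • T = S + (t : 𝕜) • T + ((u - t : ℝ) : 𝕜) • T := by
    push_cast
    module
  rw [hsplit]
  refine denseRange_add_of_norm_le hd (C := (u - t) * C / (1 - t)) (by positivity)
    ((div_lt_one ht').2 hCtu) fun x => ?_
  rw [div_mul_eq_mul_div, le_div_iff₀ ht']
  calc ‖(((u - t : ℝ) : 𝕜) • T) x‖ * (1 - t) = (u - t) * ((1 - t) * ‖T x‖) := by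
        rw [LinearMap.smul_apply, norm_smul, RCLike.norm_of_nonneg hut]
        ring
    _ ≤ (u - t) * (C * ‖S x + (t : 𝕜) • T x‖) := mul_le_mul_of_nonneg_left (hT x) hut
    _ = (u - t) * C * ‖(S + (t : 𝕜) • T) x‖ := by simp [mul_assoc]

theorem denseRange_add_smul_of_one_sub_mul_norm_le (hC : 0 ≤ C)
    (hT : ∀ t ∈ Set.Ico (0 : ℝ) 1, ∀ x, (1 - t) * ‖T x‖ ≤ C * ‖S x + (t : 𝕜) • T x‖)
    (hS : DenseRange S) {t : ℝ} (ht : t ∈ Set.Ico (0 : ℝ) 1) :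
    DenseRange (S + (t : 𝕜) • T) := by
  obtain ⟨δ, hδ, hδt⟩ : ∃ δ > 0, δ * C < 1 - t := by
    have ht' : 0 < 1 - t := sub_pos.2 ht.2
    refine ⟨(1 - t) / (C + 1), by positivity, ?_⟩
    rw [div_mul_eq_mul_div, div_lt_iff₀ (by positivity)]
    linarith
  have steps : ∀ (n : ℕ) (u : ℝ), 0 ≤ u → u ≤ t → u ≤ n * δ → DenseRange (S + (u : 𝕜) • T) := by
    intro n
    induction n with
    | zero =>
      intro u hu₀ _ hu
      obtain rfl : u = 0 := le_antisymm (by simpa using hu) hu₀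
      simpa using hS
    | succ n ih =>
      intro u hu₀ hut hu
      set v := max 0 (u - δ)
      have hvu : v ≤ u := max_le hu₀ (by linarith)
      have huv : u - v ≤ δ := sub_le_comm.1 (le_max_right _ _)
      have hvn : v ≤ n * δ := max_le (by positivity) (by push_cast at hu; linarith)
      have hv₁ : v < 1 := (hvu.trans hut).trans_lt ht.2
      refine denseRange_add_smul_of_sub_mul_lt hC hvu hv₁ ?_ (hT v ⟨le_max_left _ _, hv₁⟩)
        (ih v (le_max_left _ _) (hvu.trans hut) hvn)
      calc (u - v) * C ≤ δ * C := by gcongr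
        _ < 1 - t := hδt
        _ ≤ 1 - v := by linarith
  obtain ⟨n, hn⟩ := exists_nat_ge (t / δ)
  exact steps n t ht.1 le_rfl ((div_le_iff₀ hδ).1 hn)

theorem norm_dual_add_smul_le {f g : StrongDual 𝕜 F} {v w : F} {t K : ℝ} (ht : t ≤ 1)
    (hf : f (v + w) = 0) (hw : (1 - t) * ‖w‖ ≤ C * ‖v + (t : 𝕜) • w‖)
    (hg : ‖g w‖ ≤ K * ‖v + (t : 𝕜) • w‖) :
    ‖f (v + (t : 𝕜) • w)‖ ≤ (‖f - g‖ * C + (1 - t) * K) * ‖v + (t : 𝕜) • w‖ := by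
  have ht' : 0 ≤ 1 - t := sub_nonneg.2 ht
  have hsplit : v + (t : 𝕜) • w = v + w - ((1 - t : ℝ) : 𝕜) • w := by
    push_cast
    module
  have hfw : f w = (f - g) w + g w := by simp
  calc ‖f (v + (t : 𝕜) • w)‖ = (1 - t) * ‖f w‖ := by
        rw [hsplit, map_sub, hf, zero_sub, norm_neg, map_smul, norm_smul,
          RCLike.norm_of_nonneg ht']
    _ ≤ (1 - t) * (‖f - g‖ * ‖w‖ + ‖g w‖) := by
        rw [hfw]
        gcongr
        exact norm_add_le_of_le ((f - g).le_opNorm w) le_rfl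
    _ = ‖f - g‖ * ((1 - t) * ‖w‖) + (1 - t) * ‖g w‖ := by ring
    _ ≤ ‖f - g‖ * (C * ‖v + (t : 𝕜) • w‖) + (1 - t) * (K * ‖v + (t : 𝕜) • w‖) :=
        add_le_add (mul_le_mul_of_nonneg_left hw (norm_nonneg _))
          (mul_le_mul_of_nonneg_left hg ht')
    _ = (‖f - g‖ * C + (1 - t) * K) * ‖v + (t : 𝕜) • w‖ := by ring

theorem denseRange_add_of_dense_setOf_dual_bound (hC : 0 ≤ C)
    (hT : ∀ t ∈ Set.Ico (0 : ℝ) 1, ∀ x, (1 - t) * ‖T x‖ ≤ C * ‖S x + (t : 𝕜) • T x‖)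
    (hdual : Dense {g : StrongDual 𝕜 F | ∃ K, ∀ t ∈ Set.Ico (0 : ℝ) 1, ∀ x,
      ‖g (T x)‖ ≤ K * ‖S x + (t : 𝕜) • T x‖})
    (hS : DenseRange S) : DenseRange (S + T) := by
  refine denseRange_of_forall_dual_eq_zero fun f hf => ContinuousLinearMap.ext fun y => ?_
  suffices happrox : ∀ g : StrongDual 𝕜 F, ‖f y‖ ≤ ‖f - g‖ * C * ‖y‖ by simpa using happrox f
  refine isClosed_property hdual.denseRange_val (isClosed_le (by fun_prop) (by fun_prop)) ?_
  rintro ⟨g, K, hg⟩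
  have hbound : ∀ t ∈ Set.Ico (0 : ℝ) 1, ‖f y‖ ≤ (‖f - g‖ * C + (1 - t) * K) * ‖y‖ :=
    fun t ht => norm_apply_le_of_denseRange
      (denseRange_add_smul_of_one_sub_mul_norm_le hC hT hS ht) f.continuous
      (fun x => norm_dual_add_smul_le ht.2.le (hf x) (hT t ht x) (hg t ht x)) y
  have h_one_mem : (1 : ℝ) ∈ closure (Set.Ico 0 1) := by simp [closure_Ico]
  simpa using le_on_closure hbound (by fun_prop) (by fun_prop) h_one_mem

end NormedSpace

section InnerProductSpace

variable {𝕜 H : Type*} [RCLike 𝕜] [NormedAddCommGroup H] [InnerProductSpace 𝕜 H]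

open UniformSpace in
theorem denseRange_toDualMap : DenseRange (InnerProductSpace.toDualMap 𝕜 H) := by
  let restrict (w : Completion H) : StrongDual 𝕜 H :=
    InnerProductSpace.toDualMap 𝕜 (Completion H) w ∘L Completion.toComplL
  have hcont : Continuous restrict := by fun_prop
  have hsurj : Function.Surjective restrict := fun f => by
    refine ⟨(InnerProductSpace.toDual 𝕜 _).symm (f.extend Completion.toComplL), ?_⟩
    ext x
    simp only [restrict, ContinuousLinearMap.comp_apply, InnerProductSpace.toDualMap_apply_apply,
      InnerProductSpace.toDual_symm_apply]
    exact ContinuousLinearMap.extend_eq (e := Completion.toComplL) f Completion.denseRange_coe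
      (Completion.isUniformInducing_coe H) x
  convert hsurj.denseRange.comp Completion.denseRange_coe hcont using 1
  ext x y
  simp [restrict]

variable {D : Submodule 𝕜 H}

/-- Symmetry of an operator `T` with domain `D`; Mathlib's `LinearMap.IsSymmetric` only covers
operators defined on the whole space. The domain is not required to be dense. -/
def IsSymmetricOperator (T : D →ₗ[𝕜] H) : Prop :=
  ∀ x y : D, inner 𝕜 (T x) (y : H) = inner 𝕜 (x : H) (T y)

namespace IsSymmetricOperator

variable {A B T : D →ₗ[𝕜] H}

theorem add_ofReal_smul (hA : IsSymmetricOperator A) (hB : IsSymmetricOperator B) (t : ℝ) :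
    IsSymmetricOperator (A + (t : 𝕜) • B) := fun x y => by
  simp [inner_add_left, inner_add_right, inner_smul_left, inner_smul_right, hA x y, hB x y]

theorem im_inner_apply_self (hT : IsSymmetricOperator T) (x : D) :
    RCLike.im (inner 𝕜 (x : H) (T x)) = 0 := by
  rw [← RCLike.conj_eq_iff_im, inner_conj_symm, hT]

theorem abs_im_mul_norm_le (hT : IsSymmetricOperator T) (z : 𝕜) (x : D) :
    |RCLike.im z| * ‖x‖ ≤ ‖T x + z • (x : H)‖ := by
  have him : RCLike.im (inner 𝕜 (x : H) (T x + z • (x : H))) = RCLike.im z * ‖x‖ ^ 2 := by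
    rw [inner_add_right, map_add, hT.im_inner_apply_self, inner_smul_right,
      inner_self_eq_norm_sq_to_K]
    norm_cast
    simp
  have hsq : |RCLike.im z| * ‖x‖ * ‖x‖ ≤ ‖T x + z • (x : H)‖ * ‖x‖ := by
    calc |RCLike.im z| * ‖x‖ * ‖x‖ = |RCLike.im (inner 𝕜 (x : H) (T x + z • (x : H)))| := by
          rw [him, abs_mul, abs_sq]; ring
      _ ≤ ‖x‖ * ‖T x + z • (x : H)‖ := (RCLike.abs_im_le_norm _).trans (norm_inner_le_norm _ _)
      _ = ‖T x + z • (x : H)‖ * ‖x‖ := mul_comm _ _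
  rcases (norm_nonneg x).eq_or_lt with hx | hx
  · simp [← hx]
  · exact le_of_mul_le_mul_right hsq hx

variable {b : ℝ} {z : 𝕜}

theorem norm_le_norm_add_smul_add_smul_div (hA : IsSymmetricOperator A) (hB : IsSymmetricOperator B)
    (hz : RCLike.im z ≠ 0) (t : ℝ) (x : D) :
    ‖x‖ ≤ ‖A x + z • (x : H) + (t : 𝕜) • B x‖ / |RCLike.im z| := by
  rw [le_div_iff₀' (abs_pos.2 hz), add_right_comm]
  exact (hA.add_ofReal_smul hB t).abs_im_mul_norm_le z x

theorem one_sub_mul_norm_le_mul_norm_add_smul_add_smul (hA : IsSymmetricOperator A)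
    (hB : IsSymmetricOperator B) (hb : 0 ≤ b) (hbound : ∀ x, ‖B x‖ ≤ ‖A x‖ + b * ‖x‖)
    (hz : RCLike.im z ≠ 0) {t : ℝ} (ht : 0 ≤ t) (x : D) :
    (1 - t) * ‖B x‖ ≤
      (1 + (‖z‖ + b) / |RCLike.im z|) * ‖A x + z • (x : H) + (t : 𝕜) • B x‖ := by
  set p := A x + z • (x : H) + (t : 𝕜) • B x with hp
  have hAx : ‖A x‖ ≤ ‖p‖ + ‖z‖ * ‖x‖ + t * ‖B x‖ := by
    have hAp : A x = p - z • (x : H) - (t : 𝕜) • B x := by rw [hp]; abel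
    calc ‖A x‖ ≤ ‖p‖ + ‖z • (x : H)‖ + ‖(t : 𝕜) • B x‖ :=
          hAp ▸ norm_sub_le_of_le (norm_sub_le _ _) le_rfl
      _ = ‖p‖ + ‖z‖ * ‖x‖ + t * ‖B x‖ := by
          rw [norm_smul, norm_smul, RCLike.norm_of_nonneg ht, Submodule.coe_norm]
  calc (1 - t) * ‖B x‖ ≤ ‖p‖ + (‖z‖ + b) * ‖x‖ := by linarith [hbound x]
    _ ≤ ‖p‖ + (‖z‖ + b) * (‖p‖ / |RCLike.im z|) := by
        gcongr
        exact norm_le_norm_add_smul_add_smul_div hA hB hz t x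
    _ = (1 + (‖z‖ + b) / |RCLike.im z|) * ‖p‖ := by ring

theorem denseRange_add_add_smul (hD : Dense (D : Set H)) (hA : IsSymmetricOperator A)
    (hB : IsSymmetricOperator B) (hb : 0 ≤ b) (hbound : ∀ x, ‖B x‖ ≤ ‖A x‖ + b * ‖x‖)
    (hz : RCLike.im z ≠ 0) (hAz : DenseRange fun x : D => A x + z • (x : H)) :
    DenseRange fun x : D => (A + B) x + z • (x : H) := by
  have hdual : Dense (InnerProductSpace.toDualMap 𝕜 H '' D) :=
    denseRange_toDualMap.dense_image (LinearIsometry.continuous _) hD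
  have hsum : DenseRange (A + z • D.subtype + B) := by
    refine denseRange_add_of_dense_setOf_dual_bound (C := 1 + (‖z‖ + b) / |RCLike.im z|)
      (by positivity) (fun t ht =>
        one_sub_mul_norm_le_mul_norm_add_smul_add_smul hA hB hb hbound hz ht.1)
      (hdual.mono ?_) hAz
    rintro _ ⟨y, hy, rfl⟩
    refine ⟨‖B ⟨y, hy⟩‖ / |RCLike.im z|, fun t _ x => ?_⟩
    calc ‖inner 𝕜 y (B x)‖ = ‖inner 𝕜 (B ⟨y, hy⟩) (x : H)‖ := by rw [hB]
      _ ≤ ‖B ⟨y, hy⟩‖ * ‖x‖ := norm_inner_le_norm _ _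
      _ ≤ ‖B ⟨y, hy⟩‖ * (‖A x + z • (x : H) + (t : 𝕜) • B x‖ / |RCLike.im z|) := by
          gcongr
          exact norm_le_norm_add_smul_add_smul_div hA hB hz t x
      _ = ‖B ⟨y, hy⟩‖ / |RCLike.im z| * ‖A x + z • (x : H) + (t : 𝕜) • B x‖ := by ring
  rw [add_right_comm] at hsum
  exact hsum

end IsSymmetricOperator

end InnerProductSpace

theorem wuest_theorem_general {H : Type*} [NormedAddCommGroup H] [InnerProductSpace ℂ H]
    {D : Submodule ℂ H} (hD : Dense (D : Set H)) (A B : D →ₗ[ℂ] H)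
    (hAsym : ∀ x y : D, ⟪A x, (y : H)⟫_ℂ = ⟪(x : H), A y⟫_ℂ)
    (hA : EssSelfAdjoint D A)
    (hBsym : ∀ x y : D, ⟪B x, (y : H)⟫_ℂ = ⟪(x : H), B y⟫_ℂ)
    (b : ℝ) (hb : 0 ≤ b)
    (hbound : ∀ φ : D, ‖B φ‖ ≤ ‖A φ‖ + b * ‖φ‖) :
    EssSelfAdjoint D (A + B) := by
  have hAB {z : ℂ} (hz : z.im ≠ 0) (hAz : DenseRange fun x : D => A x + z • (x : H)) :
      DenseRange fun x : D => (A + B) x + z • (x : H) :=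
    IsSymmetricOperator.denseRange_add_add_smul hD hAsym hBsym hb hbound hz hAz
  simp only [EssSelfAdjoint, sub_eq_add_neg, ← neg_smul] at hA ⊢
  exact ⟨hAB (by simp) hA.1, hAB (by simp) hA.2⟩

/-- **Wüst's Theorem.** If `A` is essentially self-adjoint on the dense domain `D` and `B` is a
symmetric operator with the same domain satisfying `‖Bφ‖ ≤ ‖Aφ‖ + b‖φ‖` for some `b ≥ 0`, then
`A + B` is essentially self-adjoint on `D`. -/
theorem wuest_theorem {H : Type*} [NormedAddCommGroup H] [InnerProductSpace ℂ H]
    [CompleteSpace H] {D : Submodule ℂ H} (hD : Dense (D : Set H)) (A B : D →ₗ[ℂ] H)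
    (hAsym : ∀ x y : D, ⟪A x, (y : H)⟫_ℂ = ⟪(x : H), A y⟫_ℂ)
    (hA : EssSelfAdjoint D A)
    (hBsym : ∀ x y : D, ⟪B x, (y : H)⟫_ℂ = ⟪(x : H), B y⟫_ℂ)
    (b : ℝ) (hb : 0 ≤ b)
    (hbound : ∀ φ : D, ‖B φ‖ ≤ ‖A φ‖ + b * ‖φ‖) :
    EssSelfAdjoint D (A + B) :=
  wuest_theorem_general hD A B hAsym hA hBsym b hb hbound
end

section
/- Let (H_n)_{n∈ℕ} be complex Hilbert spaces and H their Hilbert direct sum. For each n let D_n ⊆ H_n be a dense subspace and A_n : D_n → H_n a positive, essentially self-adjoint operator. Let D ⊆ H be the algebraic direct sum of the D_n (sequences ψ with ψ_n ∈ D_n for all n and ψ_n = 0 for all but finitely many n), and define on D the operators (Aψ)_n := A_n ψ_n and (Nψ)_n := n ψ_n. Let B : D → H be a symmetric operator, and suppose there exist constants c, d ≥ 0 such that for all ψ ∈ D: (i) ‖Bψ‖ ≤ d‖Nψ‖ + d‖ψ‖, and (ii) Re⟨Nψ, (A + B)ψ⟩ ≥ −c⟨ψ, (N + I)ψ⟩.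 Then the operator A + B with domain D is essentially self-adjoint. -/
/-!
If a perturbation is bounded relative to a whole path of symmetric operators, then the ranges of the
shifts by `±i` stay dense along the path. Hence `A + K N`, which is essentially self-adjoint
summand by summand, remains so after adding `B` once `K` is large (Kato–Rellich), and the lower
bound on `Re ⟨Nψ, Tψ⟩` for `T = A + B`, which makes `N` bounded relative to `T + ε N`, lets `K`
decrease to any `ε > 0`. For `φ` orthogonal to the range of `T ± i`, testing against
`T + ε N ± i` and moving `N` onto a vector `η` of the domain gives
`‖φ‖ ≤ C (‖φ - η‖ + ε ‖Nη‖)` with `C` independent of `ε`; let `ε → 0`, then `η → φ`.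
-/

open scoped InnerProductSpace

open Filter
open scoped Topology

section DenseRange

variable {𝕜 E F : Type*} [NormedField 𝕜] [AddCommGroup E] [Module 𝕜 E]
  [NormedAddCommGroup F] [NormedSpace 𝕜 F]

lemma denseRange_add_of_norm_le_s3 {X Y : E →ₗ[𝕜] F} {a : ℝ} (ha : a < 1)
    (hY : ∀ x, ‖Y x‖ ≤ a * ‖X x‖) (hX : DenseRange X) : DenseRange (X + Y) := by
  by_contra hXY
  obtain ⟨r, har, hr⟩ := exists_between ha
  have hproper : ∃ y, y ∉ (X + Y).range.topologicalClosure := not_forall.1 hXY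
  obtain ⟨y, hy, hdist⟩ :=
    riesz_lemma (X + Y).range.isClosed_topologicalClosure hproper hr
  have hbound : ∀ z, r * ‖y‖ ≤ ‖y - z‖ + a * ‖z‖ := fun z =>
    hX.induction_on (p := fun z => r * ‖y‖ ≤ ‖y - z‖ + a * ‖z‖) z
      (isClosed_le (by fun_prop) (by fun_prop)) fun x => calc
        r * ‖y‖ ≤ ‖y - (X + Y) x‖ := hdist _ (Submodule.le_topologicalClosure _ ⟨x, rfl⟩)
        _ = ‖(y - X x) - Y x‖ := by rw [LinearMap.add_apply, sub_sub]
        _ ≤ ‖y - X x‖ + ‖Y x‖ := norm_sub_le _ _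
        _ ≤ ‖y - X x‖ + a * ‖X x‖ := by gcongr; exact hY x
  have hy_pos : 0 < ‖y‖ := norm_pos_iff.2 fun h => hy (h ▸ zero_mem _)
  refine har.not_ge (le_of_mul_le_mul_right ?_ hy_pos)
  simpa using hbound y

lemma denseRange_add_smul_of_isPreconnected {X V : E →ₗ[𝕜] F} {s : Set 𝕜}
    (hs : IsPreconnected s) {C : ℝ} (hV : ∀ r ∈ s, ∀ x, ‖V x‖ ≤ C * ‖(X + r • V) x‖)
    {p q : 𝕜} (hp : p ∈ s) (hq : q ∈ s) (h : DenseRange (X + p • V)) :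
    DenseRange (X + q • V) := by
  have hstep : ∀ p ∈ s, ∀ q, ‖q - p‖ * C < 1 →
      DenseRange (X + p • V) → DenseRange (X + q • V) := by
    intro p hp q hpq h
    have hsplit : X + q • V = (X + p • V) + (q - p) • V := by module
    rw [hsplit]
    refine denseRange_add_of_norm_le_s3 hpq (fun x => ?_) h
    rw [LinearMap.smul_apply, norm_smul, mul_assoc]
    gcongr
    exact hV p hp x
  refine hs.induction₂' (fun p q => DenseRange (X + p • V) → DenseRange (X + q • V))
    (fun p hp => ?_) (fun _ _ _ _ _ _ hpq hqr => hqr ∘ hpq) hp hq h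
  have hclose : ∀ᶠ q in 𝓝 p, ‖q - p‖ * C < 1 :=
    ContinuousAt.eventually_lt (by fun_prop) (by fun_prop) (by simp)
  filter_upwards [self_mem_nhdsWithin, nhdsWithin_le_nhds hclose] with q hq hpq
  exact ⟨hstep p hp q hpq, hstep q hq p (norm_sub_rev q p ▸ hpq)⟩

end DenseRange

section InnerProductSpace

variable {𝕜 E H : Type*} [RCLike 𝕜] [NormedAddCommGroup H] [InnerProductSpace 𝕜 H]

lemma norm_le_norm_add_of_re_inner_nonneg {x y : H} (h : 0 ≤ RCLike.re ⟪x, y⟫_𝕜) :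
    ‖x‖ ≤ ‖y + x‖ := by
  refine le_of_sq_le_sq ?_ (norm_nonneg _)
  rw [add_comm, norm_add_sq (𝕜 := 𝕜)]
  nlinarith [sq_nonneg ‖y‖]

lemma norm_le_of_norm_inner_le_of_denseRange {X : E → H} (hX : DenseRange X) {φ : H} {a : ℝ}
    (ha : 0 ≤ a) (h : ∀ x, ‖⟪φ, X x⟫_𝕜‖ ≤ a * ‖X x‖) : ‖φ‖ ≤ a := by
  have hφ : ‖⟪φ, φ⟫_𝕜‖ ≤ a * ‖φ‖ :=
    hX.induction_on (p := fun y => ‖⟪φ, y⟫_𝕜‖ ≤ a * ‖y‖) φ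
      (isClosed_le (by fun_prop) (by fun_prop)) h
  rw [← inner_self_re_eq_norm, inner_self_eq_norm_mul_norm] at hφ
  nlinarith [norm_nonneg φ]

lemma denseRange_of_inner_eq_zero [CompleteSpace H] [AddCommGroup E] [Module 𝕜 E]
    {X : E →ₗ[𝕜] H} (h : ∀ φ : H, (∀ x, ⟪φ, X x⟫_𝕜 = 0) → φ = 0) : DenseRange X := by
  have hrange : X.rangeᗮ = ⊥ := (Submodule.eq_bot_iff _).2 fun φ hφ =>
    h φ fun x => (Submodule.mem_orthogonal' _ _).1 hφ _ ⟨x, rfl⟩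
  rw [← Submodule.topologicalClosure_eq_top_iff,
    ← Submodule.dense_iff_topologicalClosure_eq_top, LinearMap.coe_range] at hrange
  exact hrange

end InnerProductSpace

section SymmetricOp

variable {𝕜 H : Type*} [RCLike 𝕜] [NormedAddCommGroup H] [InnerProductSpace 𝕜 H]
  {D : Submodule 𝕜 H} {S T N : D →ₗ[𝕜] H}

/-- A symmetric operator `S` with domain `D`. The domain need not be dense. -/
def IsSymmetricOp (S : D →ₗ[𝕜] H) : Prop :=
  ∀ x y : D, ⟪S x, (y : H)⟫_𝕜 = ⟪(x : H), S y⟫_𝕜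

lemma isSymmetricOp_subtype : IsSymmetricOp D.subtype := fun _ _ => rfl

namespace IsSymmetricOp

lemma add (hS : IsSymmetricOp S) (hT : IsSymmetricOp T) : IsSymmetricOp (S + T) := fun x y => by
  simp only [LinearMap.add_apply, inner_add_left, inner_add_right, hS x y, hT x y]

lemma ofReal_smul (hS : IsSymmetricOp S) (r : ℝ) : IsSymmetricOp ((r : 𝕜) • S) := fun x y => by
  simp only [LinearMap.smul_apply, inner_smul_left, inner_smul_right, hS x y, RCLike.conj_ofReal]

lemma im_inner_apply_self (hS : IsSymmetricOp S) (x : D) :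
    RCLike.im ⟪S x, (x : H)⟫_𝕜 = 0 := by
  rw [← RCLike.conj_eq_iff_im, inner_conj_symm, hS x x]

lemma norm_add_smul_subtype_sq (hS : IsSymmetricOp S) {z : 𝕜} (hz : RCLike.re z = 0) (x : D) :
    ‖(S + z • D.subtype) x‖ ^ 2 = ‖S x‖ ^ 2 + (‖z‖ * ‖x‖) ^ 2 := by
  have hcross : RCLike.re ⟪S x, z • (x : H)⟫_𝕜 = 0 := by
    rw [inner_smul_right, RCLike.mul_re, hz, hS.im_inner_apply_self, zero_mul, mul_zero, sub_zero]
  rw [LinearMap.add_apply, LinearMap.smul_apply, Submodule.subtype_apply,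
    norm_add_sq (𝕜 := 𝕜), hcross, norm_smul, Submodule.coe_norm]
  ring

lemma norm_apply_le (hS : IsSymmetricOp S) {z : 𝕜} (hz : RCLike.re z = 0) (x : D) :
    ‖S x‖ ≤ ‖(S + z • D.subtype) x‖ := by
  refine le_of_sq_le_sq ?_ (norm_nonneg _)
  rw [hS.norm_add_smul_subtype_sq hz]
  exact le_add_of_nonneg_right (sq_nonneg _)

lemma norm_mul_norm_le (hS : IsSymmetricOp S) {z : 𝕜} (hz : RCLike.re z = 0) (x : D) :
    ‖z‖ * ‖x‖ ≤ ‖(S + z • D.subtype) x‖ := by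
  refine le_of_sq_le_sq ?_ (norm_nonneg _)
  rw [hS.norm_add_smul_subtype_sq hz]
  exact le_add_of_nonneg_left (sq_nonneg _)

lemma norm_inner_add_smul_le (hN : IsSymmetricOp N) {φ : H} (hφ : ∀ x, ⟪φ, T x⟫_𝕜 = 0) {ε : ℝ}
    (hε : 0 ≤ ε) (η ψ : D) :
    ‖⟪φ, (T + (ε : 𝕜) • N) ψ⟫_𝕜‖ ≤ (‖φ - η‖ + ε * ‖N η‖) * (‖ψ‖ + ε * ‖N ψ‖) := by
  have hinner : ⟪φ, (T + (ε : 𝕜) • N) ψ⟫_𝕜 = (ε : 𝕜) * (⟪φ - η, N ψ⟫_𝕜 + ⟪N η, (ψ : H)⟫_𝕜) := by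
    rw [LinearMap.add_apply, LinearMap.smul_apply, inner_add_right, hφ ψ, inner_smul_right,
      hN η ψ, inner_sub_left, sub_add_cancel, zero_add]
  calc ‖⟪φ, (T + (ε : 𝕜) • N) ψ⟫_𝕜‖
      = ε * ‖⟪φ - η, N ψ⟫_𝕜 + ⟪N η, (ψ : H)⟫_𝕜‖ := by
        rw [hinner, norm_mul, RCLike.norm_ofReal, abs_of_nonneg hε]
    _ ≤ ε * (‖φ - η‖ * ‖N ψ‖ + ‖N η‖ * ‖ψ‖) := by
        gcongr
        exact norm_add_le_of_le (norm_inner_le_norm _ _) (norm_inner_le_norm _ _)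
    _ ≤ (‖φ - η‖ + ε * ‖N η‖) * (‖ψ‖ + ε * ‖N ψ‖) := by
        have : 0 ≤ ‖φ - η‖ * ‖ψ‖ + ε * ‖N η‖ * (ε * ‖N ψ‖) := by positivity
        linarith

end IsSymmetricOp

lemma denseRange_of_eventually_denseRange_add_smul [CompleteSpace H] (hD : Dense (D : Set H))
    (hN : IsSymmetricOp N) {C : ℝ} (hC : 0 ≤ C)
    (h : ∀ᶠ ε : ℝ in 𝓝[>] 0, DenseRange (T + (ε : 𝕜) • N) ∧
      ∀ ψ, ‖ψ‖ + ε * ‖N ψ‖ ≤ C * ‖(T + (ε : 𝕜) • N) ψ‖) : DenseRange T := by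
  refine denseRange_of_inner_eq_zero fun φ hφ => ?_
  have hpert : ∀ η : D, ∀ᶠ ε : ℝ in 𝓝[>] 0, ‖φ‖ ≤ (‖φ - η‖ + ε * ‖N η‖) * C := by
    intro η
    filter_upwards [h, self_mem_nhdsWithin] with ε ⟨hdense, hbound⟩ hε
    have hε : 0 < ε := hε
    refine norm_le_of_norm_inner_le_of_denseRange (𝕜 := 𝕜) hdense (by positivity) fun ψ => ?_
    calc ‖⟪φ, (T + (ε : 𝕜) • N) ψ⟫_𝕜‖
        ≤ (‖φ - η‖ + ε * ‖N η‖) * (‖ψ‖ + ε * ‖N ψ‖) :=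
          hN.norm_inner_add_smul_le hφ hε.le η ψ
      _ ≤ (‖φ - η‖ + ε * ‖N η‖) * (C * ‖(T + (ε : 𝕜) • N) ψ‖) := by gcongr; exact hbound ψ
      _ = (‖φ - η‖ + ε * ‖N η‖) * C * ‖(T + (ε : 𝕜) • N) ψ‖ := by ring
  have hdist : ∀ η : D, ‖φ‖ ≤ ‖φ - η‖ * C := fun η => by
    have hlim : Tendsto (fun ε : ℝ => (‖φ - η‖ + ε * ‖N η‖) * C) (𝓝[>] 0)
        (𝓝 ((‖φ - η‖ + 0 * ‖N η‖) * C)) :=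
      (Continuous.tendsto (by fun_prop) 0).mono_left nhdsWithin_le_nhds
    simpa only [zero_mul, add_zero] using ge_of_tendsto hlim (hpert η)
  have hφ_le : ‖φ‖ ≤ ‖φ - φ‖ * C :=
    hD.denseRange_val.induction_on (p := fun η => ‖φ‖ ≤ ‖φ - η‖ * C) φ
      (isClosed_le (by fun_prop) (by fun_prop)) hdist
  simpa using hφ_le

end SymmetricOp

section EssSelfAdjoint

variable {H : Type*} [NormedAddCommGroup H] [InnerProductSpace ℂ H]
  {D : Submodule ℂ H} {A B S T N V : D →ₗ[ℂ] H}

lemma essSelfAdjoint_iff_denseRange_add_smul :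
    EssSelfAdjoint D S ↔
      ∀ z : ℂ, z.re = 0 → ‖z‖ = 1 → DenseRange (S + z • D.subtype) := by
  have hI : (fun x : D => S x + Complex.I • (x : H)) = S + Complex.I • D.subtype := rfl
  have hnegI : (fun x : D => S x - Complex.I • (x : H)) = S + (-Complex.I) • D.subtype := by
    funext x
    simp [sub_eq_add_neg]
  rw [EssSelfAdjoint, hI, hnegI]
  refine ⟨fun h z hre hnorm => ?_, fun h =>
    ⟨h _ Complex.I_re Complex.norm_I, h _ (by simp) (by simp)⟩⟩
  rcases eq_or_eq_neg_of_abs_eq ((Complex.abs_im_eq_norm.2 hre).trans hnorm) with him | him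
  · obtain rfl : z = Complex.I := Complex.ext hre him
    exact h.1
  · obtain rfl : z = -Complex.I := Complex.ext (by simpa using hre) (by simpa using him)
    exact h.2

namespace EssSelfAdjoint

theorem add_smul_of_isPreconnected {s : Set ℝ} (hs : IsPreconnected s) (hS : IsSymmetricOp S)
    (hV : IsSymmetricOp V) {C : ℝ} (hC : 0 ≤ C)
    (hle : ∀ r ∈ s, ∀ x, ‖V x‖ ≤ C * (‖(S + (r : ℂ) • V) x‖ + ‖x‖))
    {p q : ℝ} (hp : p ∈ s) (hq : q ∈ s) (h : EssSelfAdjoint D (S + (p : ℂ) • V)) :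
    EssSelfAdjoint D (S + (q : ℂ) • V) := by
  rw [essSelfAdjoint_iff_denseRange_add_smul] at h ⊢
  intro z hre hnorm
  have hbound : ∀ r ∈ Complex.ofReal '' s, ∀ x,
      ‖V x‖ ≤ (2 * C) * ‖(S + z • D.subtype + r • V) x‖ := by
    rintro _ ⟨r, hr, rfl⟩ x
    have hsymm := hS.add (hV.ofReal_smul r)
    have hx := hsymm.norm_mul_norm_le hre x
    rw [hnorm, one_mul] at hx
    rw [add_right_comm]
    calc ‖V x‖ ≤ C * (‖(S + (r : ℂ) • V) x‖ + ‖x‖) := hle r hr x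
      _ ≤ C * (‖(S + (r : ℂ) • V + z • D.subtype) x‖
            + ‖(S + (r : ℂ) • V + z • D.subtype) x‖) := by
          gcongr
          exacts [hsymm.norm_apply_le hre x, hx]
      _ = (2 * C) * ‖(S + (r : ℂ) • V + z • D.subtype) x‖ := by ring
  rw [add_right_comm]
  refine denseRange_add_smul_of_isPreconnected
    (hs.image _ Complex.continuous_ofReal.continuousOn) hbound
    (Set.mem_image_of_mem _ hp) (Set.mem_image_of_mem _ hq) ?_
  rw [add_right_comm]
  exact h z hre hnorm

/-- The Kato–Rellich theorem. -/
theorem add_of_norm_le (hS : IsSymmetricOp S) (hV : IsSymmetricOp V) {a b : ℝ} (ha0 : 0 ≤ a)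
    (ha : a < 1) (hb : 0 ≤ b) (hle : ∀ x, ‖V x‖ ≤ a * ‖S x‖ + b * ‖x‖)
    (h : EssSelfAdjoint D S) : EssSelfAdjoint D (S + V) := by
  have ha' : 0 < 1 - a := sub_pos.2 ha
  have hbound : ∀ r ∈ Set.Icc (0 : ℝ) 1, ∀ x,
      ‖V x‖ ≤ (a + b) / (1 - a) * (‖(S + (r : ℂ) • V) x‖ + ‖x‖) := by
    intro r hr x
    have hSx : ‖S x‖ ≤ ‖(S + (r : ℂ) • V) x‖ + ‖V x‖ := calc
      ‖S x‖ ≤ ‖S x + (r : ℂ) • V x‖ + ‖(r : ℂ) • V x‖ := norm_le_add_norm_add _ _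
      _ ≤ ‖(S + (r : ℂ) • V) x‖ + ‖V x‖ := by
        rw [norm_smul, Complex.norm_of_nonneg hr.1]
        gcongr
        exacts [le_rfl, mul_le_of_le_one_left (norm_nonneg _) hr.2]
    rw [div_mul_eq_mul_div, le_div_iff₀ ha']
    have := mul_le_mul_of_nonneg_left hSx ha0
    have : 0 ≤ a * ‖x‖ + b * ‖(S + (r : ℂ) • V) x‖ := by positivity
    linarith [hle x]
  simpa using add_smul_of_isPreconnected isPreconnected_Icc hS hV (by positivity) hbound
    (Set.left_mem_Icc.2 zero_le_one) (Set.right_mem_Icc.2 zero_le_one) (by simpa using h)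

lemma add_ofReal_smul_subtype (hS : IsSymmetricOp S) (r : ℝ) (h : EssSelfAdjoint D S) :
    EssSelfAdjoint D (S + (r : ℂ) • D.subtype) :=
  h.add_of_norm_le hS (isSymmetricOp_subtype.ofReal_smul r) le_rfl one_pos (abs_nonneg r)
    fun x => by simp [norm_smul]

end EssSelfAdjoint

lemma mul_norm_le_of_re_inner_ge {c : ℝ} (hc : 0 ≤ c)
    (hlow : ∀ ψ : D, -c * (⟪(ψ : H), N ψ + (ψ : H)⟫_ℂ).re ≤ (⟪N ψ, T ψ⟫_ℂ).re)
    {ε : ℝ} (hε : 0 ≤ ε) (ψ : D) :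
    ε * ‖N ψ‖ ≤ ‖(T + (ε : ℂ) • N) ψ‖ + (1 + c + c * ε) * ‖ψ‖ := by
  have hform : (⟪(ψ : H), N ψ + (ψ : H)⟫_ℂ).re ≤ ‖ψ‖ * ‖N ψ‖ + ‖ψ‖ ^ 2 := by
    rw [inner_add_right, Complex.add_re]
    exact add_le_add (re_inner_le_norm (𝕜 := ℂ) _ _) (inner_self_eq_norm_sq (𝕜 := ℂ) _).le
  have hsplit : (⟪N ψ, (T + (ε : ℂ) • N) ψ⟫_ℂ).re = (⟪N ψ, T ψ⟫_ℂ).re + ε * ‖N ψ‖ ^ 2 := by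
    rw [LinearMap.add_apply, LinearMap.smul_apply, inner_add_right, inner_smul_right,
      Complex.add_re, Complex.re_ofReal_mul]
    congr 2
    exact inner_self_eq_norm_sq (𝕜 := ℂ) _
  have hupper : (⟪N ψ, (T + (ε : ℂ) • N) ψ⟫_ℂ).re ≤ ‖N ψ‖ * ‖(T + (ε : ℂ) • N) ψ‖ :=
    re_inner_le_norm (𝕜 := ℂ) _ _
  have hquad : ε * ‖N ψ‖ ^ 2 ≤
      ‖N ψ‖ * ‖(T + (ε : ℂ) • N) ψ‖ + c * (‖ψ‖ * ‖N ψ‖ + ‖ψ‖ ^ 2) := by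
    linarith [hlow ψ, mul_le_mul_of_nonneg_left hform hc]
  by_contra! hlt
  have hψ_le : ‖ψ‖ ≤ ε * ‖N ψ‖ := by
    have : 0 ≤ ‖(T + (ε : ℂ) • N) ψ‖ + (c + c * ε) * ‖ψ‖ := by positivity
    linarith
  have hNψ_pos : 0 < ε * ‖N ψ‖ := lt_of_le_of_lt (by positivity) hlt
  refine lt_irrefl ((ε * ‖N ψ‖) ^ 2) ?_
  calc (ε * ‖N ψ‖) ^ 2 = ε * (ε * ‖N ψ‖ ^ 2) := by ring
    _ ≤ ε * (‖N ψ‖ * ‖(T + (ε : ℂ) • N) ψ‖ + c * (‖ψ‖ * ‖N ψ‖ + ‖ψ‖ ^ 2)) := by gcongr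
    _ = (ε * ‖N ψ‖) * (‖(T + (ε : ℂ) • N) ψ‖ + c * ‖ψ‖) + c * ε * ‖ψ‖ * ‖ψ‖ := by ring
    _ ≤ (ε * ‖N ψ‖) * (‖(T + (ε : ℂ) • N) ψ‖ + c * ‖ψ‖) + c * ε * ‖ψ‖ * (ε * ‖N ψ‖) := by gcongr
    _ = (ε * ‖N ψ‖) * (‖(T + (ε : ℂ) • N) ψ‖ + (c + c * ε) * ‖ψ‖) := by ring
    _ ≤ (ε * ‖N ψ‖) * (‖(T + (ε : ℂ) • N) ψ‖ + (1 + c + c * ε) * ‖ψ‖) := by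
        gcongr
        linarith
    _ < (ε * ‖N ψ‖) * (ε * ‖N ψ‖) := by gcongr
    _ = (ε * ‖N ψ‖) ^ 2 := (sq _).symm

lemma EssSelfAdjoint.add_smul_of_re_inner_ge (hT : IsSymmetricOp T) (hN : IsSymmetricOp N)
    {c : ℝ} (hc : 0 ≤ c)
    (hlow : ∀ ψ : D, -c * (⟪(ψ : H), N ψ + (ψ : H)⟫_ℂ).re ≤ (⟪N ψ, T ψ⟫_ℂ).re)
    {ε K : ℝ} (hε : 0 < ε) (hεK : ε ≤ K) (h : EssSelfAdjoint D (T + (K : ℂ) • N)) :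
    EssSelfAdjoint D (T + (ε : ℂ) • N) := by
  have hK : 0 < K := hε.trans_le hεK
  have hbound : ∀ r ∈ Set.Icc ε K, ∀ ψ,
      ‖N ψ‖ ≤ (1 + c + c * K) / ε * (‖(T + (r : ℂ) • N) ψ‖ + ‖ψ‖) := by
    intro r hr ψ
    rw [div_mul_eq_mul_div, le_div_iff₀ hε, mul_comm ‖N ψ‖]
    calc ε * ‖N ψ‖ ≤ r * ‖N ψ‖ := by gcongr; exact hr.1
      _ ≤ ‖(T + (r : ℂ) • N) ψ‖ + (1 + c + c * r) * ‖ψ‖ :=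
        mul_norm_le_of_re_inner_ge hc hlow (hε.le.trans hr.1) ψ
      _ ≤ (1 + c + c * K) * ‖(T + (r : ℂ) • N) ψ‖ + (1 + c + c * K) * ‖ψ‖ := by
        gcongr
        · exact le_mul_of_one_le_left (norm_nonneg _) (by nlinarith)
        · exact hr.2
      _ = (1 + c + c * K) * (‖(T + (r : ℂ) • N) ψ‖ + ‖ψ‖) := by ring
  exact add_smul_of_isPreconnected isPreconnected_Icc hT hN (by positivity) hbound
    (Set.right_mem_Icc.2 hεK) (Set.left_mem_Icc.2 hεK) h

/-- Konrady's trick. -/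
theorem essSelfAdjoint_of_add_smul [CompleteSpace H] (hD : Dense (D : Set H))
    (hT : IsSymmetricOp T) (hN : IsSymmetricOp N) {c K : ℝ} (hc : 0 ≤ c) (hK : 0 < K)
    (hlow : ∀ ψ : D, -c * (⟪(ψ : H), N ψ + (ψ : H)⟫_ℂ).re ≤ (⟪N ψ, T ψ⟫_ℂ).re)
    (h : EssSelfAdjoint D (T + (K : ℂ) • N)) : EssSelfAdjoint D T := by
  rw [essSelfAdjoint_iff_denseRange_add_smul]
  intro z hre hnorm
  refine denseRange_of_eventually_denseRange_add_smul (𝕜 := ℂ) hD hN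
    (by positivity : 0 ≤ 3 + c + c * K) ?_
  filter_upwards [Ioc_mem_nhdsGT hK] with ε ⟨hε, hεK⟩
  have hεN := h.add_smul_of_re_inner_ge hT hN hc hlow hε hεK
  rw [add_right_comm]
  refine ⟨essSelfAdjoint_iff_denseRange_add_smul.1 hεN z hre hnorm, fun ψ => ?_⟩
  have hsymm := hT.add (hN.ofReal_smul ε)
  have hψ := hsymm.norm_mul_norm_le hre ψ
  rw [hnorm, one_mul] at hψ
  calc ‖ψ‖ + ε * ‖N ψ‖
      ≤ ‖ψ‖ + (‖(T + (ε : ℂ) • N) ψ‖ + (1 + c + c * K) * ‖ψ‖) := by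
        gcongr
        refine (mul_norm_le_of_re_inner_ge hc hlow hε.le ψ).trans ?_
        gcongr
    _ = ‖(T + (ε : ℂ) • N) ψ‖ + (2 + c + c * K) * ‖ψ‖ := by ring
    _ ≤ ‖(T + (ε : ℂ) • N + z • D.subtype) ψ‖
          + (2 + c + c * K) * ‖(T + (ε : ℂ) • N + z • D.subtype) ψ‖ := by
        gcongr
        exacts [hsymm.norm_apply_le hre ψ, hψ]
    _ = (3 + c + c * K) * ‖(T + (ε : ℂ) • N + z • D.subtype) ψ‖ := by ring

lemma EssSelfAdjoint.add_smul_add (hA : IsSymmetricOp A) (hN : IsSymmetricOp N)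
    (hB : IsSymmetricOp B) (hNA : ∀ ψ, 0 ≤ (⟪N ψ, A ψ⟫_ℂ).re) {a b K : ℝ} (ha : 0 ≤ a)
    (haK : a < K) (hb : 0 ≤ b) (hbound : ∀ ψ, ‖B ψ‖ ≤ a * ‖N ψ‖ + b * ‖ψ‖)
    (h : EssSelfAdjoint D (A + (K : ℂ) • N)) : EssSelfAdjoint D (A + (K : ℂ) • N + B) := by
  have hK : 0 < K := ha.trans_lt haK
  refine h.add_of_norm_le (hA.add (hN.ofReal_smul K)) hB (a := a / K) (by positivity)
    ((div_lt_one hK).2 haK) hb fun ψ => (hbound ψ).trans ?_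
  have hKN : K * ‖N ψ‖ ≤ ‖(A + (K : ℂ) • N) ψ‖ := by
    have hre : 0 ≤ (⟪(K : ℂ) • N ψ, A ψ⟫_ℂ).re := by
      rw [inner_smul_left, Complex.conj_ofReal, Complex.re_ofReal_mul]
      exact mul_nonneg hK.le (hNA ψ)
    simpa [norm_smul, abs_of_pos hK] using norm_le_norm_add_of_re_inner_nonneg (𝕜 := ℂ) hre
  refine add_le_add ?_ le_rfl
  calc a * ‖N ψ‖ = a / K * (K * ‖N ψ‖) := by field_simp
    _ ≤ a / K * ‖(A + (K : ℂ) • N) ψ‖ := by gcongr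

end EssSelfAdjoint

section DirectSum

variable {𝕜 ι : Type*} [NormedField 𝕜] {G : ι → Type*} [∀ i, NormedAddCommGroup (G i)]
  [∀ i, NormedSpace 𝕜 (G i)] {p : ENNReal}

lemma dense_of_single_mem [DecidableEq ι] [Fact (1 ≤ p)] (hp : p ≠ ⊤) (K : Submodule 𝕜 (lp G p))
    {Y : ∀ i, Set (G i)} (hY : ∀ i, Dense (Y i)) (hK : ∀ i, ∀ y ∈ Y i, lp.single p i y ∈ K) :
    Dense (K : Set (lp G p)) := by
  have hsingle : ∀ i (y : G i), lp.single p i y ∈ K.topologicalClosure := fun i =>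
    isClosed_property (hY i).denseRange_val
      (K.isClosed_topologicalClosure.preimage (lp.isometry_single i).continuous)
      fun y => K.le_topologicalClosure (hK i y y.2)
  exact fun f => K.isClosed_topologicalClosure.mem_of_tendsto (lp.hasSum_single hp f)
    (Eventually.of_forall fun _ => sum_mem fun i _ => hsingle i (f i))

/-- The algebraic direct sum `⨁ᵢ Dᵢ`, as a subspace of the `ℓᵖ` direct sum of the ambient spaces:
the domain on which direct sums of unbounded operators are defined. -/
def algDirectSum (p : ENNReal) (Dn : ∀ i, Submodule 𝕜 (G i)) : Submodule 𝕜 (lp G p) where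
  carrier := {ψ | {i | ψ i ≠ 0}.Finite ∧ ∀ i, ψ i ∈ Dn i}
  add_mem' {ψ φ} hψ hφ := by
    refine ⟨(hψ.1.union hφ.1).subset fun i hi => ?_, fun i => add_mem (hψ.2 i) (hφ.2 i)⟩
    by_contra! h
    simp_all
  zero_mem' := by simp
  smul_mem' a ψ hψ := by
    refine ⟨hψ.1.subset fun i hi h => hi ?_, fun i => (Dn i).smul_mem a (hψ.2 i)⟩
    rw [lp.coeFn_smul, Pi.smul_apply, h, smul_zero]

variable {Dn : ∀ i, Submodule 𝕜 (G i)}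

lemma mem_algDirectSum {ψ : lp G p} :
    ψ ∈ algDirectSum p Dn ↔ {i | ψ i ≠ 0}.Finite ∧ ∀ i, ψ i ∈ Dn i := Iff.rfl

lemma apply_mem_of_mem_algDirectSum {ψ : lp G p} (hψ : ψ ∈ algDirectSum p Dn) (i : ι) :
    ψ i ∈ Dn i :=
  (mem_algDirectSum.1 hψ).2 i

lemma single_mem_algDirectSum [DecidableEq ι] (i : ι) (x : Dn i) :
    lp.single p i (x : G i) ∈ algDirectSum p Dn := by
  refine mem_algDirectSum.2 ⟨(Set.finite_singleton i).subset fun j hj => ?_, fun j => ?_⟩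
  · by_contra hji
    exact hj (lp.single_apply_ne p i _ hji)
  · rcases eq_or_ne j i with rfl | hji
    · rw [lp.single_apply_self]
      exact x.2
    · rw [lp.single_apply_ne p i _ hji]
      exact zero_mem _

/-- `S` is the direct sum of the operators `Sᵢ`, that is `(Sψ)ᵢ = Sᵢψᵢ` on the algebraic direct sum
of their domains. -/
def IsDirectSum (S : algDirectSum p Dn →ₗ[𝕜] lp G p) (Sn : ∀ i, Dn i →ₗ[𝕜] G i) : Prop :=
  ∀ (ψ : algDirectSum p Dn) (i : ι),
    S ψ i = Sn i ⟨(ψ : lp G p) i, apply_mem_of_mem_algDirectSum ψ.2 i⟩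

lemma isDirectSum_subtype :
    IsDirectSum (algDirectSum p Dn).subtype fun i => (Dn i).subtype :=
  fun _ _ => rfl

namespace IsDirectSum

variable {S T : algDirectSum p Dn →ₗ[𝕜] lp G p} {Sn Tn : ∀ i, Dn i →ₗ[𝕜] G i}

lemma add (hS : IsDirectSum S Sn) (hT : IsDirectSum T Tn) :
    IsDirectSum (S + T) fun i => Sn i + Tn i := fun ψ i =>
  congrArg₂ (· + ·) (hS ψ i) (hT ψ i)

lemma smul (hS : IsDirectSum S Sn) (a : 𝕜) : IsDirectSum (a • S) fun i => a • Sn i :=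
  fun ψ i => congrArg (a • ·) (hS ψ i)

lemma apply_single [DecidableEq ι] (hS : IsDirectSum S Sn) (i : ι) (x : Dn i) :
    S ⟨lp.single p i (x : G i), single_mem_algDirectSum i x⟩ = lp.single p i (Sn i x) := by
  ext j
  rw [hS]
  rcases eq_or_ne j i with rfl | hji
  · refine (congrArg (Sn j) (Subtype.ext ?_)).trans (lp.single_apply_self p j _).symm
    exact lp.single_apply_self p j _
  · refine Eq.trans ?_ (lp.single_apply_ne p i _ hji).symm
    refine (congrArg (Sn j) (Subtype.ext ?_)).trans (map_zero _)
    exact lp.single_apply_ne p i _ hji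

lemma denseRange [Fact (1 ≤ p)] (hp : p ≠ ⊤) (hS : IsDirectSum S Sn)
    (h : ∀ i, DenseRange (Sn i)) : DenseRange S := by
  classical
  have hrange : Dense (S.range : Set (lp G p)) := dense_of_single_mem hp S.range h <| by
    rintro i _ ⟨x, rfl⟩
    exact ⟨_, hS.apply_single i x⟩
  rwa [LinearMap.coe_range] at hrange

end IsDirectSum

lemma dense_algDirectSum [Fact (1 ≤ p)] (hp : p ≠ ⊤) (hDn : ∀ i, Dense (Dn i : Set (G i))) :
    Dense (algDirectSum p Dn : Set (lp G p)) := by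
  classical
  exact dense_of_single_mem hp _ hDn fun i y hy => single_mem_algDirectSum i ⟨y, hy⟩

end DirectSum

section HilbertSum

variable {𝕜 ι : Type*} [RCLike 𝕜] {G : ι → Type*} [∀ i, NormedAddCommGroup (G i)]
  [∀ i, InnerProductSpace 𝕜 (G i)] {Dn : ∀ i, Submodule 𝕜 (G i)}
  {S T : algDirectSum 2 Dn →ₗ[𝕜] lp G 2} {Sn Tn : ∀ i, Dn i →ₗ[𝕜] G i}

namespace IsDirectSum

lemma isSymmetricOp (hS : IsDirectSum S Sn) (hSn : ∀ i, IsSymmetricOp (Sn i)) :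
    IsSymmetricOp S := fun ψ φ => by
  rw [lp.inner_eq_tsum, lp.inner_eq_tsum]
  refine tsum_congr fun i => ?_
  rw [hS, hS]
  exact hSn i ⟨ψ.1 i, _⟩ ⟨φ.1 i, _⟩

lemma re_inner_nonneg (hS : IsDirectSum S Sn) (hT : IsDirectSum T Tn)
    (h : ∀ i (x : Dn i), 0 ≤ RCLike.re ⟪Sn i x, Tn i x⟫_𝕜) (ψ : algDirectSum 2 Dn) :
    0 ≤ RCLike.re ⟪S ψ, T ψ⟫_𝕜 := by
  refine (RCLike.hasSum_re 𝕜 (lp.hasSum_inner (S ψ) (T ψ))).nonneg fun i => ?_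
  rw [hS, hT]
  exact h i _

end IsDirectSum

end HilbertSum

section ComplexHilbertSum

variable {ι : Type*} {G : ι → Type*} [∀ i, NormedAddCommGroup (G i)]
  [∀ i, InnerProductSpace ℂ (G i)] {Dn : ∀ i, Submodule ℂ (G i)}
  {A N B S : algDirectSum 2 Dn →ₗ[ℂ] lp G 2} {An Sn : ∀ i, Dn i →ₗ[ℂ] G i}

lemma IsDirectSum.essSelfAdjoint (hS : IsDirectSum S Sn)
    (h : ∀ i, EssSelfAdjoint (Dn i) (Sn i)) : EssSelfAdjoint (algDirectSum 2 Dn) S :=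
  essSelfAdjoint_iff_denseRange_add_smul.2 fun z hre hnorm =>
    (hS.add (isDirectSum_subtype.smul z)).denseRange (by norm_num) fun i =>
      essSelfAdjoint_iff_denseRange_add_smul.1 (h i) z hre hnorm

theorem konrady_fock_general [∀ i, CompleteSpace (G i)] (hDn : ∀ i, Dense (Dn i : Set (G i)))
    (hAn_symm : ∀ i, IsSymmetricOp (An i))
    (hAn_nonneg : ∀ i (x : Dn i), 0 ≤ (⟪(x : G i), An i x⟫_ℂ).re)
    (hAn_ess : ∀ i, EssSelfAdjoint (Dn i) (An i)) (hA : IsDirectSum A An)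
    {w : ι → ℝ} (hw : ∀ i, 0 ≤ w i) (hN : IsDirectSum N fun i => (w i : ℂ) • (Dn i).subtype)
    (hB : IsSymmetricOp B) {a b c : ℝ} (ha : 0 ≤ a) (hb : 0 ≤ b) (hc : 0 ≤ c)
    (hbound : ∀ ψ, ‖B ψ‖ ≤ a * ‖N ψ‖ + b * ‖ψ‖)
    (hlow : ∀ ψ : algDirectSum 2 Dn,
      -c * (⟪(ψ : lp G 2), N ψ + (ψ : lp G 2)⟫_ℂ).re ≤ (⟪N ψ, A ψ + B ψ⟫_ℂ).re) :
    EssSelfAdjoint (algDirectSum 2 Dn) (A + B) := by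
  have hA_symm := hA.isSymmetricOp hAn_symm
  have hN_symm := hN.isSymmetricOp fun i => isSymmetricOp_subtype.ofReal_smul (w i)
  have hNA : ∀ ψ, 0 ≤ (⟪N ψ, A ψ⟫_ℂ).re := hN.re_inner_nonneg hA fun i x => by
    rw [LinearMap.smul_apply, Submodule.subtype_apply, inner_smul_left, Complex.conj_ofReal,
      RCLike.re_eq_complex_re, Complex.re_ofReal_mul]
    exact mul_nonneg (hw i) (hAn_nonneg i x)
  have hAN : EssSelfAdjoint (algDirectSum 2 Dn) (A + ((a + 1 : ℝ) : ℂ) • N) :=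
    (hA.add (hN.smul _)).essSelfAdjoint fun i => by
      rw [smul_smul, ← Complex.ofReal_mul]
      exact (hAn_ess i).add_ofReal_smul_subtype (hAn_symm i) _
  have hANB := hAN.add_smul_add hA_symm hN_symm hB hNA ha (lt_add_one a) hb hbound
  exact essSelfAdjoint_of_add_smul (dense_algDirectSum (by norm_num) hDn) (hA_symm.add hB)
    hN_symm hc (by positivity) hlow (add_right_comm A _ B ▸ hANB)

end ComplexHilbertSum

/-- **Konrady's trick in Fock space** (Theorem 3.5 of the paper).  On the Hilbert direct sum
`H = ⊕ₙ Hₙ`, let `A = ⊕ₙ Aₙ` with each `Aₙ` positive and essentially self-adjoint on a dense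
domain `Dₙ ⊆ Hₙ`, let `N` be the number operator, and let `B` be symmetric on the algebraic
direct sum `D` with `‖Bψ‖ ≤ d‖Nψ‖ + d‖ψ‖` and `Re⟨Nψ, (A+B)ψ⟩ ≥ -c⟨ψ, (N+I)ψ⟩`.
Then `A + B` is essentially self-adjoint on `D`. -/
theorem konrady_fock
    {G : ℕ → Type*} [∀ n, NormedAddCommGroup (G n)] [∀ n, InnerProductSpace ℂ (G n)]
    [∀ n, CompleteSpace (G n)]
    (Dn : ∀ n, Submodule ℂ (G n)) (hDn : ∀ n, Dense ((Dn n : Set (G n))))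
    (An : ∀ n, (Dn n) →ₗ[ℂ] G n)
    (hAnsym : ∀ n, ∀ x y : Dn n, ⟪An n x, (y : G n)⟫_ℂ = ⟪(x : G n), An n y⟫_ℂ)
    (hAnpos : ∀ n, ∀ x : Dn n, 0 ≤ (⟪(x : G n), An n x⟫_ℂ).re)
    (hAnsa : ∀ n, EssSelfAdjoint (Dn n) (An n))
    (D : Submodule ℂ (lp G 2))
    (hD : ∀ ψ : lp G 2,
      ψ ∈ D ↔ {n : ℕ | ψ n ≠ 0}.Finite ∧ ∀ n, ψ n ∈ Dn n)
    (A N B : D →ₗ[ℂ] lp G 2)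
    (hA : ∀ (ψ : D) (n : ℕ) (h : (ψ : lp G 2) n ∈ Dn n),
      (A ψ : lp G 2) n = An n ⟨(ψ : lp G 2) n, h⟩)
    (hN : ∀ (ψ : D) (n : ℕ), (N ψ : lp G 2) n = (n : ℂ) • (ψ : lp G 2) n)
    (hBsym : ∀ x y : D, ⟪B x, (y : lp G 2)⟫_ℂ = ⟪(x : lp G 2), B y⟫_ℂ)
    (c d : ℝ) (hc : 0 ≤ c) (hd : 0 ≤ d)
    (hbound : ∀ ψ : D, ‖B ψ‖ ≤ d * ‖N ψ‖ + d * ‖ψ‖)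
    (hlow : ∀ ψ : D,
      -c * (⟪(ψ : lp G 2), N ψ + (ψ : lp G 2)⟫_ℂ).re ≤ (⟪N ψ, A ψ + B ψ⟫_ℂ).re) :
    EssSelfAdjoint D (A + B) := by
  obtain rfl : D = algDirectSum 2 Dn := Submodule.ext hD
  exact konrady_fock_general hDn hAnsym hAnpos hAnsa (fun ψ n => hA ψ n _)
    (fun n => n.cast_nonneg) (by simpa [IsDirectSum] using hN) hBsym hd hd hc hbound hlow
end

section
/- Let T₁ and T₂ be self-adjoint operators on a complex Hilbert space H with a common core D, and suppose that 0 ≤ ⟨ψ, T₁ψ⟩ ≤ ⟨ψ, T₂ψ⟩ for all ψ ∈ D. Then the bounded inverses R_i := (T_i + I)^{-1} (which exist for i = 1, 2) satisfy 0 ≤ ⟨x, R₂ x⟩ ≤ ⟨x, R₁ x⟩ for every x ∈ H; that is, (T₁ + I)^{-1} ≥ (T₂ + I)^{-1} ≥ 0 as bounded self-adjoint operators. -/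
open scoped InnerProductSpace ComplexOrder

/-!
Put `A₁ = T₁ + c` and `A₂ = T₂ + c`, where `c > 0`. Each `Aᵢ` is self-adjoint and bounded below
by `c`, so its range is closed and has trivial orthogonal complement; this gives the inverses
`Rᵢ`. To compare them, expand `0 ≤ ⟪w - u, A₁ (w - u)⟫` with `u = R₁ y`:
`2 re ⟪y, w⟫ ≤ re ⟪w, A₁ w⟫ + re ⟪y, R₁ y⟫`. On `D` we may replace `A₁ w` by `A₂ w`, and the
resulting inequality is closed in the graph norm of `T₂`, so it holds on all of `dom T₂`, which
`dom T₁` need not contain. Taking `w = R₂ y` gives `⟪y, R₂ y⟫ ≤ ⟪y, R₁ y⟫`.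
-/

section Core

variable {R E F : Type*} [CommRing R] [AddCommGroup E] [AddCommGroup F] [Module R E] [Module R F]
  [TopologicalSpace R] [TopologicalSpace E] [TopologicalSpace F] [ContinuousAdd E]
  [ContinuousAdd F] [ContinuousSMul R E] [ContinuousSMul R F]

theorem graph_closure_le_topologicalClosure_graph (f : E →ₗ.[R] F) :
    f.closure.graph ≤ f.graph.topologicalClosure := by
  by_cases hf : f.IsClosable
  · exact hf.graph_closure_eq_closure_graph.ge
  · rw [LinearPMap.closure_def' hf]
    exact f.graph.le_topologicalClosure

theorem forall_mem_graph_of_hasCore {f : E →ₗ.[R] F} {D : Submodule R E} (hD : f.HasCore D)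
    {P : E × F → Prop} (hP : IsClosed {p | P p})
    (h : ∀ (x : E) (hx : x ∈ D), P (x, f ⟨x, hD.le_domain hx⟩)) (x : f.domain) :
    P (x, f x) := by
  have hx : ((x : E), f x) ∈ (f.domRestrict D).graph.topologicalClosure :=
    graph_closure_le_topologicalClosure_graph _ (hD.closure_eq.symm ▸ f.mem_graph x)
  refine closure_minimal (t := {p | P p}) ?_ hP hx
  rintro ⟨a, b⟩ hab
  obtain ⟨z, rfl, rfl⟩ := (LinearPMap.mem_graph_iff _).1 hab
  have hz : f.domRestrict D z = f ⟨z, hD.le_domain z.2.1⟩ := LinearPMap.domRestrict_apply rfl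
  simpa only [Set.mem_ofPred_eq, hz] using h z z.2.1

end Core

section BoundedBelow

variable {𝕜 E F : Type*} [NormedField 𝕜] [NormedAddCommGroup E] [NormedSpace 𝕜 E]
  [NormedAddCommGroup F] [NormedSpace 𝕜 F]

/-- `R` is a bounded inverse, defined on all of `F`, of the partially defined operator `A`. -/
structure IsBoundedInverse (A : E →ₗ.[𝕜] F) (R : F →L[𝕜] E) : Prop where
  mem_domain (y : F) : R y ∈ A.domain
  apply_inverse (y : F) : A ⟨R y, mem_domain y⟩ = y
  inverse_apply (x : A.domain) : R (A x) = x

theorem isClosed_range_of_norm_le_mul [CompleteSpace E] [CompleteSpace F] {A : E →ₗ.[𝕜] F}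
    (hA : A.IsClosed) {C : ℝ} (hC : ∀ x : A.domain, ‖(x : E)‖ ≤ C * ‖A x‖) :
    IsClosed (Set.range A) := by
  have : CompleteSpace A.graph := IsClosed.completeSpace_coe (hs := hA)
  let π : A.graph →L[𝕜] F := (ContinuousLinearMap.snd 𝕜 E F).comp A.graph.subtypeL
  have hbound (p : A.graph) : ‖p‖ ≤ (max C 1).toNNReal * ‖π p‖ := by
    obtain ⟨⟨a, b⟩, hp⟩ := p
    obtain ⟨x, rfl, rfl⟩ := (LinearPMap.mem_graph_iff _).1 hp
    change max ‖(x : E)‖ ‖A x‖ ≤ (max C 1).toNNReal * ‖A x‖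
    rw [Real.coe_toNNReal _ (by positivity), max_mul_of_nonneg _ _ (norm_nonneg _), one_mul]
    exact max_le_max_right _ (hC x)
  have hrange : Set.range A = Set.range π := by
    ext y
    simp [π]
  rw [hrange]
  exact (π.antilipschitz_of_bound hbound).isClosed_range π.uniformContinuous

theorem exists_isBoundedInverse_of_surjective {A : E →ₗ.[𝕜] F} (hA : Function.Surjective A)
    {C : ℝ} (hC : ∀ x : A.domain, ‖(x : E)‖ ≤ C * ‖A x‖) :
    ∃ R : F →L[𝕜] E, IsBoundedInverse A R := by
  have hinj : Function.Injective A.toFun := by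
    refine (injective_iff_map_eq_zero A.toFun).2 fun x hx => ?_
    have hAx : A x = 0 := hx
    simpa [hAx] using hC x
  let e := LinearEquiv.ofBijective A.toFun ⟨hinj, hA⟩
  have he (y : F) : A (e.symm y) = y := e.apply_symm_apply y
  let R : F →L[𝕜] E := (A.domain.subtype ∘ₗ e.symm.toLinearMap).mkContinuous C fun y =>
    (hC (e.symm y)).trans_eq (by rw [he])
  exact ⟨R, fun y => (e.symm y).2, he, fun x => congrArg Subtype.val (e.symm_apply_apply x)⟩

end BoundedBelow

section InnerProduct

variable {𝕜 E : Type*} [RCLike 𝕜] [NormedAddCommGroup E] [InnerProductSpace 𝕜 E]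

theorem nonneg_of_hasCore {T : E →ₗ.[𝕜] E} {D : Submodule 𝕜 E} (hD : T.HasCore D)
    (h : ∀ (x : E) (hx : x ∈ D), 0 ≤ ⟪x, T ⟨x, hD.le_domain hx⟩⟫_𝕜) (x : T.domain) :
    0 ≤ ⟪(x : E), T x⟫_𝕜 :=
  forall_mem_graph_of_hasCore hD (P := fun p => 0 ≤ ⟪p.1, p.2⟫_𝕜)
    (isClosed_le (by fun_prop) (by fun_prop)) h x

theorem mul_norm_le_norm_of_mul_sq_le_re_inner {c : ℝ} {x y : E}
    (h : c * ‖x‖ ^ 2 ≤ RCLike.re ⟪x, y⟫_𝕜) : c * ‖x‖ ≤ ‖y‖ := by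
  rcases (norm_nonneg x).eq_or_lt with hx | hx
  · simp [← hx]
  · refine le_of_mul_le_mul_left ?_ hx
    calc ‖x‖ * (c * ‖x‖) = c * ‖x‖ ^ 2 := by ring
      _ ≤ ‖x‖ * ‖y‖ := h.trans (re_inner_le_norm x y)

theorem two_mul_re_inner_apply_le {A : E →ₗ.[𝕜] E} (hA : A.IsFormalAdjoint A)
    (hpos : ∀ x : A.domain, 0 ≤ ⟪(x : E), A x⟫_𝕜) (u w : A.domain) :
    2 * RCLike.re ⟪A u, (w : E)⟫_𝕜 ≤
      RCLike.re ⟪(w : E), A w⟫_𝕜 + RCLike.re ⟪A u, (u : E)⟫_𝕜 := by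
  have hsq : 0 ≤ RCLike.re ⟪(w - u : E), A (w - u)⟫_𝕜 := (RCLike.nonneg_iff.1 (hpos (w - u))).1
  have hwu : RCLike.re ⟪(w : E), A u⟫_𝕜 = RCLike.re ⟪A u, (w : E)⟫_𝕜 := inner_re_symm _ _
  rw [LinearPMap.map_sub, inner_sub_left, inner_sub_right, inner_sub_right, ← hA u w, ← hA u u]
    at hsq
  simp only [map_sub] at hsq
  linarith

theorem IsBoundedInverse.inner_nonneg {A : E →ₗ.[𝕜] E} {R : E →L[𝕜] E}
    (hR : IsBoundedInverse A R) (hA : A.IsFormalAdjoint A)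
    (hpos : ∀ x : A.domain, 0 ≤ ⟪(x : E), A x⟫_𝕜) (y : E) : 0 ≤ ⟪y, R y⟫_𝕜 := by
  have h := hpos ⟨R y, hR.mem_domain y⟩
  rwa [← hA, hR.apply_inverse] at h

/-- The operator `T + c`. It is reducible so that its domain unfolds to that of `T`. -/
abbrev addScalar (T : E →ₗ.[𝕜] E) (c : 𝕜) : E →ₗ.[𝕜] E where
  domain := T.domain
  toFun := T.toFun + c • T.domain.subtype

theorem addScalar_apply (T : E →ₗ.[𝕜] E) (c : 𝕜) (x : T.domain) :
    addScalar T c x = T x + c • (x : E) :=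
  rfl

theorem isFormalAdjoint_addScalar {T : E →ₗ.[𝕜] E} (hT : T.IsFormalAdjoint T) (c : ℝ) :
    (addScalar T (c : 𝕜)).IsFormalAdjoint (addScalar T (c : 𝕜)) := fun x y => by
  rw [addScalar_apply, addScalar_apply, inner_add_left, inner_add_right, hT, inner_smul_left,
    inner_smul_right, RCLike.conj_ofReal]

theorem inner_addScalar_apply (T : E →ₗ.[𝕜] E) (c : ℝ) (x : T.domain) :
    ⟪(x : E), addScalar T (c : 𝕜) x⟫_𝕜 = ⟪(x : E), T x⟫_𝕜 + ((c * ‖(x : E)‖ ^ 2 : ℝ) : 𝕜) := by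
  rw [addScalar_apply, inner_add_right, inner_smul_right, inner_self_eq_norm_sq_to_K]
  push_cast
  rfl

theorem inner_addScalar_nonneg {T : E →ₗ.[𝕜] E} (hpos : ∀ x : T.domain, 0 ≤ ⟪(x : E), T x⟫_𝕜)
    {c : ℝ} (hc : 0 ≤ c) (x : T.domain) : 0 ≤ ⟪(x : E), addScalar T (c : 𝕜) x⟫_𝕜 := by
  rw [inner_addScalar_apply]
  exact add_nonneg (hpos x) (RCLike.ofReal_nonneg.2 (by positivity))

theorem mul_norm_le_norm_addScalar_apply {T : E →ₗ.[𝕜] E}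
    (hpos : ∀ x : T.domain, 0 ≤ ⟪(x : E), T x⟫_𝕜) (c : ℝ) (x : T.domain) :
    c * ‖(x : E)‖ ≤ ‖addScalar T (c : 𝕜) x‖ := by
  refine mul_norm_le_norm_of_mul_sq_le_re_inner (𝕜 := 𝕜) ?_
  rw [inner_addScalar_apply, map_add, RCLike.ofReal_re]
  exact le_add_of_nonneg_left (RCLike.nonneg_iff.1 (hpos x)).1

theorem re_inner_le_of_addScalar_apply_eq {T₁ T₂ : E →ₗ.[𝕜] E} (hT₁ : T₁.IsFormalAdjoint T₁)
    (hpos : ∀ x : T₁.domain, 0 ≤ ⟪(x : E), T₁ x⟫_𝕜) {D : Submodule 𝕜 E} (hD₁ : D ≤ T₁.domain)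
    (hD₂ : T₂.HasCore D)
    (hmono : ∀ (x : E) (hx : x ∈ D),
      ⟪x, T₁ ⟨x, hD₁ hx⟩⟫_𝕜 ≤ ⟪x, T₂ ⟨x, hD₂.le_domain hx⟩⟫_𝕜)
    {c : ℝ} (hc : 0 ≤ c) {u : T₁.domain} {v : T₂.domain} {y : E}
    (hu : addScalar T₁ (c : 𝕜) u = y) (hv : addScalar T₂ (c : 𝕜) v = y) :
    RCLike.re ⟪y, (v : E)⟫_𝕜 ≤ RCLike.re ⟪y, (u : E)⟫_𝕜 := by
  have hcore (x : E) (hx : x ∈ D) : 2 * RCLike.re ⟪y, x⟫_𝕜 ≤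
      RCLike.re ⟪x, T₂ ⟨x, hD₂.le_domain hx⟩ + (c : 𝕜) • x⟫_𝕜 + RCLike.re ⟪y, (u : E)⟫_𝕜 := by
    have hvar := two_mul_re_inner_apply_le (isFormalAdjoint_addScalar hT₁ c)
      (inner_addScalar_nonneg hpos hc) u ⟨x, hD₁ hx⟩
    have hle := (RCLike.le_iff_re_im.1 (hmono x hx)).1
    rw [hu, addScalar_apply, inner_add_right, map_add] at hvar
    rw [inner_add_right, map_add]
    linarith
  have hdom : 2 * RCLike.re ⟪y, (v : E)⟫_𝕜 ≤
      RCLike.re ⟪(v : E), T₂ v + (c : 𝕜) • (v : E)⟫_𝕜 + RCLike.re ⟪y, (u : E)⟫_𝕜 :=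
    forall_mem_graph_of_hasCore hD₂
      (P := fun p => 2 * RCLike.re ⟪y, p.1⟫_𝕜 ≤
        RCLike.re ⟪p.1, p.2 + (c : 𝕜) • p.1⟫_𝕜 + RCLike.re ⟪y, (u : E)⟫_𝕜)
      (isClosed_le (by fun_prop) (by fun_prop)) hcore v
  rw [← addScalar_apply, hv, inner_re_symm (v : E)] at hdom
  linarith

end InnerProduct

section SelfAdjoint

variable {𝕜 E : Type*} [RCLike 𝕜] [NormedAddCommGroup E] [InnerProductSpace 𝕜 E] [CompleteSpace E]

theorem isFormalAdjoint_self_of_isSelfAdjoint {A : E →ₗ.[𝕜] E} (hA : IsSelfAdjoint A) :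
    A.IsFormalAdjoint A := by
  have h := LinearPMap.adjoint_isFormalAdjoint hA.dense_domain
  rwa [LinearPMap.isSelfAdjoint_def.1 hA] at h

theorem isSelfAdjoint_addScalar {T : E →ₗ.[𝕜] E} (hT : IsSelfAdjoint T) (c : ℝ) :
    IsSelfAdjoint (addScalar T (c : 𝕜)) := by
  have hdense : Dense ((addScalar T (c : 𝕜)).domain : Set E) := hT.dense_domain
  have hle : addScalar T (c : 𝕜) ≤ (addScalar T (c : 𝕜)).adjoint :=
    (isFormalAdjoint_addScalar (isFormalAdjoint_self_of_isSelfAdjoint hT) c).le_adjoint hdense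
  have hdomain : (addScalar T (c : 𝕜)).adjoint.domain ≤ T.domain := by
    intro y hy
    rw [← LinearPMap.isSelfAdjoint_def.1 hT]
    refine LinearPMap.mem_adjoint_domain_of_exists y
      ⟨(addScalar T (c : 𝕜)).adjoint ⟨y, hy⟩ - (c : 𝕜) • y, fun x => ?_⟩
    have hx := LinearPMap.adjoint_isFormalAdjoint hdense ⟨y, hy⟩ x
    rw [inner_sub_left, hx, addScalar_apply, inner_add_right, inner_smul_left, inner_smul_right,
      RCLike.conj_ofReal, add_sub_cancel_right]
  exact (LinearPMap.eq_of_le_of_domain_eq hle (hle.1.antisymm hdomain)).symm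

theorem eq_zero_of_forall_inner_apply_eq_zero {A : E →ₗ.[𝕜] E} (hA : IsSelfAdjoint A)
    (hinj : ∀ x : A.domain, A x = 0 → (x : E) = 0) {z : E}
    (hz : ∀ x : A.domain, ⟪z, A x⟫_𝕜 = 0) : z = 0 := by
  have hzero (x : A.domain) : ⟪(0 : E), (x : E)⟫_𝕜 = ⟪z, A x⟫_𝕜 := by rw [inner_zero_left, hz]
  have hmem : z ∈ A.adjoint.domain := LinearPMap.mem_adjoint_domain_of_exists z ⟨0, hzero⟩
  have hAz : A.adjoint ⟨z, hmem⟩ = 0 := LinearPMap.adjoint_apply_eq hA.dense_domain _ hzero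
  have hgraph : (z, 0) ∈ A.adjoint.graph := (LinearPMap.mem_graph_iff _).2 ⟨⟨z, hmem⟩, rfl, hAz⟩
  rw [LinearPMap.isSelfAdjoint_def.1 hA] at hgraph
  obtain ⟨x, rfl, hx⟩ := (LinearPMap.mem_graph_iff _).1 hgraph
  exact hinj x hx

theorem surjective_of_isSelfAdjoint_of_norm_le_mul {A : E →ₗ.[𝕜] E} (hA : IsSelfAdjoint A)
    {C : ℝ} (hC : ∀ x : A.domain, ‖(x : E)‖ ≤ C * ‖A x‖) : Function.Surjective A := by
  have hclosed : IsClosed (A.toFun.range : Set E) := isClosed_range_of_norm_le_mul hA.isClosed hC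
  have : CompleteSpace A.toFun.range := hclosed.completeSpace_coe
  refine LinearMap.range_eq_top.1 (Submodule.orthogonal_eq_bot_iff.1 ?_)
  refine (Submodule.eq_bot_iff _).2 fun z hz => ?_
  refine eq_zero_of_forall_inner_apply_eq_zero hA (fun x hx => ?_) fun x => ?_
  · simpa [hx] using hC x
  · exact (Submodule.mem_orthogonal' _ _).1 hz _ ⟨x, rfl⟩

theorem exists_isBoundedInverse_addScalar {T : E →ₗ.[𝕜] E} (hT : IsSelfAdjoint T)
    (hpos : ∀ x : T.domain, 0 ≤ ⟪(x : E), T x⟫_𝕜) {c : ℝ} (hc : 0 < c) :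
    ∃ R : E →L[𝕜] E, IsBoundedInverse (addScalar T (c : 𝕜)) R := by
  have hbound (x : T.domain) : ‖(x : E)‖ ≤ c⁻¹ * ‖addScalar T (c : 𝕜) x‖ :=
    (le_inv_mul_iff₀ hc).2 (mul_norm_le_norm_addScalar_apply hpos c x)
  exact exists_isBoundedInverse_of_surjective
    (surjective_of_isSelfAdjoint_of_norm_le_mul (isSelfAdjoint_addScalar hT c) hbound) hbound

theorem resolvent_monotone_general (T₁ T₂ : E →ₗ.[𝕜] E) (h1 : IsSelfAdjoint T₁)
    (h2 : IsSelfAdjoint T₂) (hpos : ∀ x : T₁.domain, 0 ≤ ⟪(x : E), T₁ x⟫_𝕜) {D : Submodule 𝕜 E}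
    (hD1 : D ≤ T₁.domain) (hcore2 : T₂.HasCore D)
    (hmono : ∀ (ψ : E) (hψ : ψ ∈ D),
      ⟪ψ, T₁ ⟨ψ, hD1 hψ⟩⟫_𝕜 ≤ ⟪ψ, T₂ ⟨ψ, hcore2.le_domain hψ⟩⟫_𝕜)
    {c : ℝ} (hc : 0 < c) :
    ∃ R₁ R₂ : E →L[𝕜] E,
      (∀ y : E, ∃ h : R₁ y ∈ T₁.domain, T₁ ⟨R₁ y, h⟩ + (c : 𝕜) • R₁ y = y) ∧
      (∀ y : E, ∃ h : R₂ y ∈ T₂.domain, T₂ ⟨R₂ y, h⟩ + (c : 𝕜) • R₂ y = y) ∧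
      (∀ x : T₁.domain, R₁ (T₁ x + (c : 𝕜) • (x : E)) = (x : E)) ∧
      (∀ x : T₂.domain, R₂ (T₂ x + (c : 𝕜) • (x : E)) = (x : E)) ∧
      (∀ x : E, 0 ≤ ⟪x, R₂ x⟫_𝕜 ∧ ⟪x, R₂ x⟫_𝕜 ≤ ⟪x, R₁ x⟫_𝕜) := by
  have hpos₂ : ∀ x : T₂.domain, 0 ≤ ⟪(x : E), T₂ x⟫_𝕜 :=
    nonneg_of_hasCore hcore2 fun ψ hψ => (hpos ⟨ψ, hD1 hψ⟩).trans (hmono ψ hψ)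
  have hsymm₁ := isFormalAdjoint_self_of_isSelfAdjoint h1
  have hsymm₂ := isFormalAdjoint_self_of_isSelfAdjoint h2
  obtain ⟨R₁, hR₁⟩ := exists_isBoundedInverse_addScalar h1 hpos hc
  obtain ⟨R₂, hR₂⟩ := exists_isBoundedInverse_addScalar h2 hpos₂ hc
  have hnonneg₁ :=
    hR₁.inner_nonneg (isFormalAdjoint_addScalar hsymm₁ c) (inner_addScalar_nonneg hpos hc.le)
  have hnonneg₂ :=
    hR₂.inner_nonneg (isFormalAdjoint_addScalar hsymm₂ c) (inner_addScalar_nonneg hpos₂ hc.le)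
  have hre (y : E) : RCLike.re ⟪y, R₂ y⟫_𝕜 ≤ RCLike.re ⟪y, R₁ y⟫_𝕜 :=
    re_inner_le_of_addScalar_apply_eq hsymm₁ hpos hD1 hcore2 hmono hc.le
      (hR₁.apply_inverse y) (hR₂.apply_inverse y)
  have him (y : E) : RCLike.im ⟪y, R₂ y⟫_𝕜 = RCLike.im ⟪y, R₁ y⟫_𝕜 := by
    rw [(RCLike.nonneg_iff.1 (hnonneg₁ y)).2, (RCLike.nonneg_iff.1 (hnonneg₂ y)).2]
  exact ⟨R₁, R₂, fun y => ⟨hR₁.mem_domain y, hR₁.apply_inverse y⟩,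
    fun y => ⟨hR₂.mem_domain y, hR₂.apply_inverse y⟩, hR₁.inverse_apply, hR₂.inverse_apply,
    fun y => ⟨hnonneg₂ y, RCLike.le_iff_re_im.2 ⟨hre y, him y⟩⟩⟩

end SelfAdjoint

/-- **Lemma 3.6 of the paper.**  If `T₂ ≥ T₁ ≥ 0` are self-adjoint operators with a common core
`D`, then the bounded everywhere-defined inverses `Rᵢ = (Tᵢ + I)⁻¹` exist and satisfy
`(T₁ + I)⁻¹ ≥ (T₂ + I)⁻¹ ≥ 0`. -/
theorem resolvent_monotone
    {H : Type*} [NormedAddCommGroup H] [InnerProductSpace ℂ H] [CompleteSpace H]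
    (T₁ T₂ : H →ₗ.[ℂ] H) (h1 : IsSelfAdjoint T₁) (h2 : IsSelfAdjoint T₂)
    (D : Submodule ℂ H) (hD1 : D ≤ T₁.domain) (hD2 : D ≤ T₂.domain)
    (hcore1 : (T₁.domRestrict D).closure = T₁) (hcore2 : (T₂.domRestrict D).closure = T₂)
    (hpos : ∀ (ψ : H) (hψ : ψ ∈ D), 0 ≤ ⟪ψ, T₁ ⟨ψ, hD1 hψ⟩⟫_ℂ)
    (hmono : ∀ (ψ : H) (hψ : ψ ∈ D), ⟪ψ, T₁ ⟨ψ, hD1 hψ⟩⟫_ℂ ≤ ⟪ψ, T₂ ⟨ψ, hD2 hψ⟩⟫_ℂ) :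
    ∃ R₁ R₂ : H →L[ℂ] H,
      (∀ y : H, ∃ h : R₁ y ∈ T₁.domain, T₁ ⟨R₁ y, h⟩ + R₁ y = y) ∧
      (∀ y : H, ∃ h : R₂ y ∈ T₂.domain, T₂ ⟨R₂ y, h⟩ + R₂ y = y) ∧
      (∀ x : T₁.domain, R₁ (T₁ x + (x : H)) = (x : H)) ∧
      (∀ x : T₂.domain, R₂ (T₂ x + (x : H)) = (x : H)) ∧
      (∀ x : H, 0 ≤ ⟪x, R₂ x⟫_ℂ ∧ ⟪x, R₂ x⟫_ℂ ≤ ⟪x, R₁ x⟫_ℂ) := by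
  simpa only [RCLike.ofReal_one, one_smul] using resolvent_monotone_general T₁ T₂ h1 h2
    (nonneg_of_hasCore ⟨hD1, hcore1⟩ hpos) hD1 ⟨hD2, hcore2⟩ hmono one_pos
end

section
/- Let T be a symmetric operator with dense domain D in a complex Hilbert space H. Suppose there is a collection 𝒞 of closed subspaces K ⊆ H such that: (i) for each K ∈ 𝒞, T maps D ∩ K into K, the subspace D ∩ K is dense in K, and the restriction of T to D ∩ K is essentially self-adjoint as an operator in the Hilbert space K; and (ii) the union over K ∈ 𝒞 of the subspaces D ∩ K is dense in H. Then T is essentially self-adjoint on D. -/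
open scoped InnerProductSpace

theorem subset_closure_of_dense_preimage_val {X : Type*} [TopologicalSpace X] {s t : Set X}
    (h : Dense ((↑) ⁻¹' t : Set s)) : s ⊆ closure t :=
  (Subtype.dense_iff.mp h).trans (closure_mono (Set.image_preimage_subset _ _))

theorem dense_of_forall_dense_preimage_val {X σ : Type*} [TopologicalSpace X] [SetLike σ X]
    {𝒞 : Set σ} {t : Set X} (ht : ∀ K ∈ 𝒞, Dense ((↑) ⁻¹' t : Set K))
    (h𝒞 : Dense (⋃ K ∈ 𝒞, (K : Set X))) : Dense t :=
  .of_closure <| h𝒞.mono <| Set.iUnion₂_subset fun K hK =>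
    subset_closure_of_dense_preimage_val (ht K hK)

theorem locality_lemma_general {H σ : Type*} [NormedAddCommGroup H] [InnerProductSpace ℂ H]
    [SetLike σ H] {D : Submodule ℂ H} (T : D →ₗ[ℂ] H) (𝒞 : Set σ)
    (hrange : ∀ K ∈ 𝒞,
      Dense {y : K | ∃ x : D, T x + Complex.I • (x : H) = (y : H)} ∧
      Dense {y : K | ∃ x : D, T x - Complex.I • (x : H) = (y : H)})
    (hunion : Dense (⋃ K ∈ 𝒞, (K : Set H))) :
    EssSelfAdjoint D T :=
  ⟨dense_of_forall_dense_preimage_val (fun K hK => (hrange K hK).1) hunion,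
    dense_of_forall_dense_preimage_val (fun K hK => (hrange K hK).2) hunion⟩

/-- **Abstract Locality Lemma** (Lemma 5.1 of the paper).  Let `T` be symmetric on the dense
domain `D` and let `𝒞` be a collection of closed subspaces `K ⊆ H` such that `T` maps `D ∩ K`
into `K`, `D ∩ K` is dense in `K`, and the restriction of `T` to `D ∩ K` is essentially
self-adjoint in the Hilbert space `K` (i.e. the ranges of `T|_{D∩K} ± i` are dense in `K`).
If `⋃_{K ∈ 𝒞} (D ∩ K)` is dense in `H`, then `T` is essentially self-adjoint on `D`. -/
theorem locality_lemma
    {H : Type*} [NormedAddCommGroup H] [InnerProductSpace ℂ H] [CompleteSpace H]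
    {D : Submodule ℂ H} (hD : Dense (D : Set H)) (T : D →ₗ[ℂ] H)
    (hsym : ∀ x y : D, ⟪T x, (y : H)⟫_ℂ = ⟪(x : H), T y⟫_ℂ)
    (𝒞 : Set (Submodule ℂ H))
    (hclosed : ∀ K ∈ 𝒞, IsClosed (K : Set H))
    (hinv : ∀ K ∈ 𝒞, ∀ x : D, (x : H) ∈ K → T x ∈ K)
    (hdenseK : ∀ K ∈ 𝒞, Dense {y : K | (y : H) ∈ D})
    (hesaK : ∀ K ∈ 𝒞,
      Dense {y : K | ∃ x : D, (x : H) ∈ K ∧ T x + Complex.I • (x : H) = (y : H)} ∧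
      Dense {y : K | ∃ x : D, (x : H) ∈ K ∧ T x - Complex.I • (x : H) = (y : H)})
    (hunion : Dense (⋃ K ∈ 𝒞, ((D : Set H) ∩ (K : Set H)))) :
    EssSelfAdjoint D T :=
  locality_lemma_general T 𝒞 (fun K hK => (hesaK K hK).imp
      (.mono fun _ => .imp fun _ => And.right) (.mono fun _ => .imp fun _ => And.right))
    (hunion.mono <| Set.iUnion₂_mono fun _ _ => Set.inter_subset_right)
end

section
/- Let (H_n)_{n∈ℕ} be complex Hilbert spaces, H their Hilbert direct sum, D ⊆ H the algebraic direct sum of dense subspaces D_n ⊆ H_n, and on D define (Nψ)_n := n ψ_n. Let A, B : D → H be linear operators and c, d ≥ 0 constants such that Re⟨Nψ, (A + B)ψ⟩ ≥ −c⟨ψ, (N + I)ψ⟩ for all ψ ∈ D. Then for all ψ ∈ D: ‖(A + B + dN)ψ‖² ≥ (d‖Nψ‖ − c‖ψ‖)² − (c² + 2cd)‖ψ‖², and consequently d‖Nψ‖ ≤ ‖(A + B + dN)ψ‖ + (c + √(c² + 2cd))‖ψ‖. -/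
open scoped InnerProductSpace

/-!
The estimate holds vector by vector: put `x = ψ`, `y = Nψ` and `z = (A + B)ψ`, and drop `‖z‖²` from
`‖z + d y‖² = ‖z‖² + 2 d Re⟪y, z⟫ + d² ‖y‖²`. By Cauchy–Schwarz `Re⟪x, y + x⟫ ≤ ‖x‖ (‖y‖ + ‖x‖)`, so
the cross term is at least `-2 c d ‖x‖ (‖y‖ + ‖x‖)`, and completing the square in `d ‖y‖` gives the
quadratic bound. The linear one follows because `r² ≤ s² + t²` implies `r ≤ s + t` for `s, t ≥ 0`.
-/

theorem le_add_of_pow_le_pow_add_pow {R : Type*} [Semiring R] [LinearOrder R]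
    [IsStrictOrderedRing R] {r s t : R} {n : ℕ} (hn : n ≠ 0) (hs : 0 ≤ s) (ht : 0 ≤ t)
    (h : r ^ n ≤ s ^ n + t ^ n) : r ≤ s + t :=
  le_of_pow_le_pow_left₀ hn (add_nonneg hs ht) (h.trans (pow_add_pow_le hs ht hn))

section

variable {𝕜 E : Type*} [RCLike 𝕜] [SeminormedAddCommGroup E] [InnerProductSpace 𝕜 E]

theorem re_inner_add_self_le_norm_mul (x y : E) :
    RCLike.re ⟪x, y + x⟫_𝕜 ≤ ‖x‖ * (‖y‖ + ‖x‖) :=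
  (re_inner_le_norm x (y + x)).trans (by gcongr; exact norm_add_le y x)

theorem norm_add_ofReal_smul_sq (y z : E) (d : ℝ) :
    ‖z + (d : 𝕜) • y‖ ^ 2 = ‖z‖ ^ 2 + 2 * d * RCLike.re ⟪y, z⟫_𝕜 + d ^ 2 * ‖y‖ ^ 2 := by
  rw [norm_add_sq (𝕜 := 𝕜), inner_smul_right, RCLike.re_ofReal_mul, inner_re_symm, norm_smul,
    RCLike.norm_ofReal, mul_pow, sq_abs]
  ring

variable {x y z : E} {c d : ℝ}

theorem sub_sq_sub_mul_sq_le_norm_add_ofReal_smul_sq (hc : 0 ≤ c) (hd : 0 ≤ d)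
    (h : -c * RCLike.re ⟪x, y + x⟫_𝕜 ≤ RCLike.re ⟪y, z⟫_𝕜) :
    (d * ‖y‖ - c * ‖x‖) ^ 2 - (c ^ 2 + 2 * c * d) * ‖x‖ ^ 2 ≤ ‖z + (d : 𝕜) • y‖ ^ 2 := by
  have hyz : -(c * (‖x‖ * (‖y‖ + ‖x‖))) ≤ RCLike.re ⟪y, z⟫_𝕜 := by
    refine le_trans ?_ h
    rw [neg_mul, neg_le_neg_iff]
    gcongr
    exact re_inner_add_self_le_norm_mul x y
  calc
    (d * ‖y‖ - c * ‖x‖) ^ 2 - (c ^ 2 + 2 * c * d) * ‖x‖ ^ 2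
      = 0 + 2 * d * -(c * (‖x‖ * (‖y‖ + ‖x‖))) + d ^ 2 * ‖y‖ ^ 2 := by ring
    _ ≤ ‖z‖ ^ 2 + 2 * d * RCLike.re ⟪y, z⟫_𝕜 + d ^ 2 * ‖y‖ ^ 2 := by gcongr; positivity
    _ = ‖z + (d : 𝕜) • y‖ ^ 2 := (norm_add_ofReal_smul_sq y z d).symm

theorem konrady_estimate_general (hc : 0 ≤ c) (hd : 0 ≤ d)
    (h : -c * RCLike.re ⟪x, y + x⟫_𝕜 ≤ RCLike.re ⟪y, z⟫_𝕜) :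
    (d * ‖y‖ - c * ‖x‖) ^ 2 - (c ^ 2 + 2 * c * d) * ‖x‖ ^ 2 ≤ ‖z + (d : 𝕜) • y‖ ^ 2 ∧
      d * ‖y‖ ≤ ‖z + (d : 𝕜) • y‖ + (c + √(c ^ 2 + 2 * c * d)) * ‖x‖ := by
  have hsq := sub_sq_sub_mul_sq_le_norm_add_ofReal_smul_sq hc hd h
  refine ⟨hsq, ?_⟩
  have hsub : d * ‖y‖ - c * ‖x‖ ≤ ‖z + (d : 𝕜) • y‖ + √(c ^ 2 + 2 * c * d) * ‖x‖ := by
    apply le_add_of_pow_le_pow_add_pow two_ne_zero (norm_nonneg _) (by positivity)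
    rw [mul_pow, Real.sq_sqrt (by positivity)]
    exact sub_le_iff_le_add.mp hsq
  linarith

end

/-- **Key estimate of Konrady's trick** (proof of Theorem 3.5 of the paper).  On the Hilbert
direct sum `H = ⊕ₙ Hₙ` with `D` the algebraic direct sum of dense subspaces `Dₙ`, `N` the number
operator, and `A, B : D → H` linear with `Re⟨Nψ, (A+B)ψ⟩ ≥ -c⟨ψ, (N+I)ψ⟩`, one has
`‖(A+B+dN)ψ‖² ≥ (d‖Nψ‖ - c‖ψ‖)² - (c² + 2cd)‖ψ‖²` and consequently
`d‖Nψ‖ ≤ ‖(A+B+dN)ψ‖ + (c + √(c² + 2cd))‖ψ‖`. -/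
theorem konrady_estimate
    {G : ℕ → Type*} [∀ n, NormedAddCommGroup (G n)] [∀ n, InnerProductSpace ℂ (G n)]
    [∀ n, CompleteSpace (G n)]
    (Dn : ∀ n, Submodule ℂ (G n)) (hDn : ∀ n, Dense ((Dn n : Set (G n))))
    (D : Submodule ℂ (lp G 2))
    (hD : ∀ ψ : lp G 2,
      ψ ∈ D ↔ {n : ℕ | ψ n ≠ 0}.Finite ∧ ∀ n, ψ n ∈ Dn n)
    (N : D →ₗ[ℂ] lp G 2)
    (hN : ∀ (ψ : D) (n : ℕ), (N ψ : lp G 2) n = (n : ℂ) • (ψ : lp G 2) n)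
    (A B : D →ₗ[ℂ] lp G 2) (c d : ℝ) (hc : 0 ≤ c) (hd : 0 ≤ d)
    (hlow : ∀ ψ : D,
      -c * (⟪(ψ : lp G 2), N ψ + (ψ : lp G 2)⟫_ℂ).re ≤ (⟪N ψ, A ψ + B ψ⟫_ℂ).re) :
    ∀ ψ : D,
      ((d * ‖N ψ‖ - c * ‖ψ‖) ^ 2 - (c ^ 2 + 2 * c * d) * ‖ψ‖ ^ 2
          ≤ ‖A ψ + B ψ + (d : ℂ) • N ψ‖ ^ 2) ∧
      (d * ‖N ψ‖ ≤ ‖A ψ + B ψ + (d : ℂ) • N ψ‖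
          + (c + Real.sqrt (c ^ 2 + 2 * c * d)) * ‖ψ‖) :=
  fun ψ => konrady_estimate_general hc hd (hlow ψ)
end
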